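/- arXiv:1911.02653 — 4 statements merged into one kernel-verified Lean document; each statement's English description precedes it below -/
import Mathlib

section
/- Let α > 0, let M_j be the α-branching number of (b̄^j, k̄^j, γ̄^j) for 1 ≤ j ≤ N, let M = max_{1 ≤ j ≤ N} M_j, and assume M < ∞. Then for every ε > 0, liminf_{k→∞} (1/k) · log p(⌊α(1+ε)k⌋, k) ≥ −M(1+ε). -/
/-!
The lower bound comes from a change of measure. For every `j`, choose a distribution `q^j` that is
feasible and nearly optimal for the branching problem of triple `j`, and follow the recurrence with
the weights `q^j` in place of `γ^j`, whatever `j` attains the minimum. The price is the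
log-likelihood ratio `∑ log (q_i / γ_i)` along the path. Per unit of `k` consumed, the path spends
on average at most `α` units of `b` and at most `M + δ` units of log-likelihood ratio, so for
`α' > α` and `c' > M + δ` the budgets `α' k` and `c' k` should suffice with high probability.

Markov's inequality for two exponential supermartingales makes this quantitative, and the result
can be checked by direct induction on `b` (`RB.lower_bound`): for every real `l`,
`p(b, k) ≥ e^{-l} (1 - e^{-θ(b - α' k)} - e^{-θ(l - c' k)})`.
The induction step needs `∑ q_i e^{θ(b_i - α' k_i)} ≤ 1` and
`∑ q_i e^{θ(log(q_i/γ_i) - c' k_i)} ≤ 1`, which hold for small `θ > 0` because both exponents have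
negative mean (`RB.eventually_mgf_le_one`). Taking `l` slightly above `c' k` and `b ≈ α(1+ε)k`
makes the bracket at least `1/2` for large `k`.
-/


open scoped Classical

noncomputable section

namespace RB

abbrev X (N : ℕ) (r : Fin N → ℕ) : Type := (j : Fin N) × Fin (r j)

variable {N : ℕ} {r : Fin N → ℕ}

/-- Kullback-Leibler divergence (with the convention `0 · log 0 = 0`,
which holds automatically since `Real.log 0 = 0`). -/
def KL {ρ : ℕ} (q g : Fin ρ → ℝ) : ℝ := ∑ i, q i * Real.log (q i / g i)

/-- the set of values of the `α`-branching optimization problem for the triple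
`(bv, kv, g)`; its infimum is the `α`-branching number. -/
def BrSet (α : ℝ) {ρ : ℕ} (bv kv : Fin ρ → ℕ) (g : Fin ρ → ℝ) : Set ℝ :=
  {x | ∃ q : Fin ρ → ℝ, (∀ i, 0 ≤ q i) ∧ (∑ i, q i = 1) ∧
        (∑ i, q i * (bv i : ℝ)) ≤ α * ∑ i, q i * (kv i : ℝ) ∧
        x = KL q g / ∑ i, q i * (kv i : ℝ)}

end RB

namespace RB

/-- Gibbs' inequality. -/
lemma KL_nonneg {ρ : ℕ} {q g : Fin ρ → ℝ} (hq : ∀ i, 0 ≤ q i) (hg : ∀ i, 0 < g i)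
    (hqs : ∑ i, q i = 1) (hgs : ∑ i, g i = 1) : 0 ≤ KL q g := by
  have h : ∑ i, (q i - g i) ≤ KL q g := by
    refine Finset.sum_le_sum fun i _ => ?_
    rcases (hq i).eq_or_lt with h0 | h0
    · rw [← h0]
      have := (hg i).le
      simpa using this
    · have h1 := Real.one_sub_inv_le_log_of_pos (div_pos h0 (hg i))
      rw [inv_div] at h1
      have h2 := mul_le_mul_of_nonneg_left h1 h0.le
      have h3 : q i * (1 - g i / q i) = q i - g i := by field_simp
      linarith
  rw [Finset.sum_sub_distrib, hqs, hgs] at h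
  linarith

/-- Since all `bv i ≥ 1`, feasibility forces the denominator `∑ q_i k_i` to be positive, so the
quotient in `BrSet` is never a division by zero. -/
lemma sum_mul_kv_pos {α : ℝ} (hα : 0 < α) {ρ : ℕ} {bv kv : Fin ρ → ℕ} (hb : ∀ i, 1 ≤ bv i)
    {q : Fin ρ → ℝ} (hq : ∀ i, 0 ≤ q i) (hqs : ∑ i, q i = 1)
    (hf : (∑ i, q i * (bv i : ℝ)) ≤ α * ∑ i, q i * (kv i : ℝ)) :
    0 < ∑ i, q i * (kv i : ℝ) := by
  have h : ∑ i, q i ≤ ∑ i, q i * (bv i : ℝ) :=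
    Finset.sum_le_sum fun i _ => le_mul_of_one_le_right (hq i) (by exact_mod_cast hb i)
  exact pos_of_mul_pos_right (by linarith) hα.le

/-- A random variable with negative mean has moment generating function at most `1` at all small
positive parameters: the derivative of the moment generating function at `0` is the mean. -/
lemma eventually_mgf_le_one {ρ : ℕ} {q x : Fin ρ → ℝ} (hqs : ∑ i, q i = 1)
    (hx : ∑ i, q i * x i < 0) :
    ∀ᶠ θ in nhdsWithin (0 : ℝ) (Set.Ioi 0), ∑ i, q i * Real.exp (θ * x i) ≤ 1 := by
  have hd : HasDerivAt (fun θ : ℝ => ∑ i, q i * Real.exp (θ * x i)) (∑ i, q i * x i) 0 := by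
    refine HasDerivAt.fun_sum fun i _ => ?_
    have h1 : HasDerivAt (fun θ : ℝ => θ * x i) (x i) 0 := by
      simpa using (hasDerivAt_id (0 : ℝ)).mul_const (x i)
    simpa using h1.exp.const_mul (q i)
  have ht := (hasDerivAt_iff_tendsto_slope.mp hd).mono_left
    (nhdsWithin_mono 0 (fun y (hy : (0 : ℝ) < y) => (ne_of_gt hy : y ≠ 0)))
  filter_upwards [ht.eventually_lt_const hx, self_mem_nhdsWithin] with θ h1 (h2 : 0 < θ)
  rw [slope_def_field, div_lt_iff₀ (by simpa using h2)] at h1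
  simp only [zero_mul, Real.exp_zero, mul_one, hqs] at h1
  linarith

/-- The change-of-measure lower bound. The parameter `l` bounds the log-likelihood ratio that may
still be spent; the two subtracted exponentials bound, under the weights `q^j`, the probabilities
of exhausting `b` and of exhausting `l`. -/
lemma lower_bound {N : ℕ} {r : Fin N → ℕ}
    {bb kb : (j : Fin N) → Fin (r j) → ℕ} (hbb : ∀ j i, 1 ≤ bb j i)
    {γ : (j : Fin N) → Fin (r j) → ℝ} (hγpos : ∀ j i, 0 < γ j i)
    (hks : ∃ j, ∀ i, kb j i ≤ 1) {p : ℤ → ℕ → ℝ}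
    (hp01 : ∀ bz k, p bz k ∈ Set.Icc (0 : ℝ) 1)
    (hpzero : ∀ bz : ℤ, 0 ≤ bz → p bz 0 = 1)
    (hprec : ∀ bz : ℤ, 0 ≤ bz → ∀ k : ℕ, 1 ≤ k →
      p bz k = sInf {x | ∃ j : Fin N, (∀ i, kb j i ≤ k) ∧
        x = ∑ i, γ j i * p (bz - (bb j i : ℤ)) (k - kb j i)})
    {q : (j : Fin N) → Fin (r j) → ℝ} (hq : ∀ j i, 0 ≤ q j i) (hqs : ∀ j, ∑ i, q j i = 1)
    {θ a c : ℝ} (hθ : 0 < θ) (ha : 0 ≤ a)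
    (h1 : ∀ j, ∑ i, q j i * Real.exp (θ * ((bb j i : ℝ) - a * kb j i)) ≤ 1)
    (h2 : ∀ j, ∑ i, q j i *
      Real.exp (θ * (Real.log (q j i / γ j i) - c * kb j i)) ≤ 1)
    (n : ℕ) : ∀ (bz : ℤ), bz < n → ∀ (k : ℕ) (l : ℝ),
      Real.exp (-l) * (1 - Real.exp (-(θ * (bz - a * k))) - Real.exp (-(θ * (l - c * k))))
        ≤ p bz k := by
  -- For `bz < 0` the first exponential is at least `1`, so the left side is nonpositive.
  have neg_b : ∀ (bz : ℤ) (k : ℕ) (l : ℝ), bz < 0 →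
      Real.exp (-l) * (1 - Real.exp (-(θ * (bz - a * k))) - Real.exp (-(θ * (l - c * k))))
        ≤ p bz k := by
    intro bz k l hb
    have hb' : (bz : ℝ) < 0 := by exact_mod_cast hb
    have hak : 0 ≤ a * k := by positivity
    have e1 : 1 ≤ Real.exp (-(θ * (bz - a * k))) := by
      apply Real.one_le_exp
      nlinarith
    have e2 := Real.exp_pos (-(θ * (l - c * k)))
    exact (mul_nonpos_of_nonneg_of_nonpos (Real.exp_pos _).le (by linarith)).trans (hp01 bz k).1
  induction n with
  | zero => exact fun bz hb k l => neg_b bz k l (by simpa using hb)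
  | succ n ih =>
    intro bz hb k l
    rcases lt_or_ge bz 0 with hb0 | hb0
    · exact neg_b bz k l hb0
    rcases Nat.eq_zero_or_pos k with rfl | hk
    · rw [hpzero bz hb0]
      have e1 := Real.exp_pos (-(θ * ((bz : ℝ) - a * (0 : ℕ))))
      have e2 := Real.exp_pos (-(θ * (l - c * (0 : ℕ))))
      have e3 := Real.exp_pos (-l)
      rcases le_or_gt 0 l with hl | hl
      · have e4 : Real.exp (-l) ≤ 1 := Real.exp_le_one_iff.mpr (by linarith)
        nlinarith
      · have e4 : 1 ≤ Real.exp (-(θ * (l - c * (0 : ℕ)))) := by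
          apply Real.one_le_exp
          push_cast
          nlinarith
        have := mul_nonpos_of_nonneg_of_nonpos e3.le
          (by linarith : 1 - Real.exp (-(θ * ((bz : ℝ) - a * (0 : ℕ))))
            - Real.exp (-(θ * (l - c * (0 : ℕ)))) ≤ 0)
        linarith
    rw [hprec bz hb0 k hk]
    apply le_csInf
    · obtain ⟨j, hj⟩ := hks
      exact ⟨_, j, fun i => (hj i).trans hk, rfl⟩
    rintro x ⟨j, hjk, rfl⟩
    set E1 := Real.exp (-(θ * (bz - a * k))) with hE1
    set E2 := Real.exp (-(θ * (l - c * k))) with hE2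
    -- The child `i` receives the budget `l - log (q_i / γ_i)`; the factor `e^{log (q_i / γ_i)}`
    -- gained this way turns the weight `γ_i` into `q_i`.
    have key : ∀ i, Real.exp (-l) * (q j i
        - E1 * (q j i * Real.exp (θ * ((bb j i : ℝ) - a * kb j i)))
        - E2 * (q j i * Real.exp (θ * (Real.log (q j i / γ j i) - c * kb j i))))
        ≤ γ j i * p (bz - (bb j i : ℤ)) (k - kb j i) := by
      intro i
      rcases (hq j i).eq_or_lt with h0 | h0
      · rw [← h0]
        simpa using mul_nonneg (hγpos j i).le (hp01 _ _).1
      have hlt : bz - (bb j i : ℤ) < n := by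
        have := hbb j i
        push_cast at hb
        omega
      have hrec := mul_le_mul_of_nonneg_left
        (ih _ hlt (k - kb j i) (l - Real.log (q j i / γ j i))) (hγpos j i).le
      refine le_trans (le_of_eq ?_) hrec
      rw [Nat.cast_sub (hjk i)]
      push_cast
      have x0 : Real.exp (-(l - Real.log (q j i / γ j i)))
          = Real.exp (-l) * (q j i / γ j i) := by
        rw [show -(l - Real.log (q j i / γ j i)) = -l + Real.log (q j i / γ j i) by ring,
          Real.exp_add, Real.exp_log (div_pos h0 (hγpos j i))]
      have x1 : Real.exp (-(θ * ((bz : ℝ) - bb j i - a * ((k : ℝ) - kb j i))))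
          = E1 * Real.exp (θ * ((bb j i : ℝ) - a * kb j i)) := by
        rw [hE1, ← Real.exp_add]
        ring_nf
      have x2 : Real.exp (-(θ * (l - Real.log (q j i / γ j i) - c * ((k : ℝ) - kb j i))))
          = E2 * Real.exp (θ * (Real.log (q j i / γ j i) - c * kb j i)) := by
        rw [hE2, ← Real.exp_add]
        ring_nf
      rw [x0, x1, x2]
      have := (hγpos j i).ne'
      field_simp
    refine le_trans ?_ (Finset.sum_le_sum fun i _ => key i)
    rw [← Finset.mul_sum, Finset.sum_sub_distrib, Finset.sum_sub_distrib, ← Finset.mul_sum,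
      ← Finset.mul_sum, hqs j]
    apply mul_le_mul_of_nonneg_left _ (Real.exp_pos _).le
    have := mul_le_mul_of_nonneg_left (h1 j) (Real.exp_pos (-(θ * ((bz : ℝ) - a * k)))).le
    have := mul_le_mul_of_nonneg_left (h2 j) (Real.exp_pos (-(θ * (l - c * k)))).le
    linarith

end RB

/-- Lemma `weak_rec` of the paper.  Under the same setup as
Theorem 2 (with `M = ⨆ j, M_j < ∞` encoded by nonemptiness of the feasible sets),
for every `ε > 0`:  `liminf_{k→∞} (1/k) log p(⌊α(1+ε)k⌋, k) ≥ -M(1+ε)`. -/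
theorem stmt_1
    (N : ℕ) (hN : 1 ≤ N) (r : Fin N → ℕ) (hr : ∀ j, 1 ≤ r j)
    (bb kb : (j : Fin N) → Fin (r j) → ℕ)
    (hbb : ∀ j i, 1 ≤ bb j i)
    (γ : (j : Fin N) → Fin (r j) → ℝ)
    (hγpos : ∀ j i, 0 < γ j i) (hγsum : ∀ j, ∑ i, γ j i = 1)
    (hks : ∃ j, ∀ i, kb j i ≤ 1)
    (p : ℤ → ℕ → ℝ)
    (hp01 : ∀ bz k, p bz k ∈ Set.Icc (0 : ℝ) 1)
    (hpneg : ∀ bz : ℤ, bz < 0 → ∀ k : ℕ, p bz k = 0)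
    (hpzero : ∀ bz : ℤ, 0 ≤ bz → p bz 0 = 1)
    (hprec : ∀ bz : ℤ, 0 ≤ bz → ∀ k : ℕ, 1 ≤ k →
      p bz k = sInf {x | ∃ j : Fin N, (∀ i, kb j i ≤ k) ∧
        x = ∑ i, γ j i * p (bz - (bb j i : ℤ)) (k - kb j i)})
    (α : ℝ) (hα : 0 < α)
    (hfeas : ∀ j, (RB.BrSet α (bb j) (kb j) (γ j)).Nonempty)
    (ε : ℝ) (hε : 0 < ε) :
    -((⨆ j, sInf (RB.BrSet α (bb j) (kb j) (γ j))) * (1 + ε)) ≤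
      Filter.liminf
        (fun k : ℕ => Real.log (p ⌊α * (1 + ε) * (k : ℝ)⌋ k) / (k : ℝ))
        Filter.atTop := by
  set M := ⨆ j, sInf (RB.BrSet α (bb j) (kb j) (γ j)) with hM
  have hnonneg : ∀ j, ∀ x ∈ RB.BrSet α (bb j) (kb j) (γ j), 0 ≤ x := by
    rintro j x ⟨q, hq, hqs, hf, rfl⟩
    exact div_nonneg (RB.KL_nonneg hq (hγpos j) hqs (hγsum j))
      (RB.sum_mul_kv_pos hα (hbb j) hq hqs hf).le
  have hM0 : 0 ≤ M := Real.iSup_nonneg fun j => Real.sInf_nonneg (hnonneg j)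
  -- The `liminf` of reals is a `sSup`; its defining set is bounded above because `log p ≤ 0`.
  have hbdd : BddAbove {x : ℝ | ∀ᶠ k : ℕ in Filter.atTop,
      x ≤ Real.log (p ⌊α * (1 + ε) * (k : ℝ)⌋ k) / (k : ℝ)} := by
    refine ⟨0, fun x hx => ?_⟩
    obtain ⟨k, hk⟩ := Filter.Eventually.exists hx
    exact hk.trans (div_nonpos_of_nonpos_of_nonneg
      (Real.log_nonpos (hp01 _ _).1 (hp01 _ _).2) (Nat.cast_nonneg k))
  refine le_of_forall_pos_le_add fun η hη => ?_
  rw [← sub_le_iff_le_add, Filter.liminf_eq]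
  refine le_csSup hbdd ?_
  change ∀ᶠ k : ℕ in Filter.atTop, _
  set δ := η / 4 with hδ
  have hδ0 : 0 < δ := by positivity
  have hex : ∀ j, ∃ q : Fin (r j) → ℝ, (∀ i, 0 ≤ q i) ∧ (∑ i, q i = 1) ∧
      (∑ i, q i * (bb j i : ℝ)) ≤ α * ∑ i, q i * (kb j i : ℝ) ∧
      RB.KL q (γ j) < (M + δ) * ∑ i, q i * (kb j i : ℝ) := by
    intro j
    obtain ⟨x, ⟨q, hq, hqs, hf, rfl⟩, hx⟩ := Real.lt_sInf_add_pos (hfeas j) hδ0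
    refine ⟨q, hq, hqs, hf, ?_⟩
    rw [← div_lt_iff₀ (RB.sum_mul_kv_pos hα (hbb j) hq hqs hf)]
    have : sInf (RB.BrSet α (bb j) (kb j) (γ j)) ≤ M :=
      le_ciSup (f := fun j => sInf (RB.BrSet α (bb j) (kb j) (γ j)))
        (Set.finite_range _).bddAbove j
    linarith
  choose q hq hqs hf hKL using hex
  have hqk := fun j => RB.sum_mul_kv_pos hα (hbb j) (hq j) (hqs j) (hf j)
  set a := α * (1 + ε / 2) with ha
  set c := M + δ with hc
  have hαε : 0 < α * (ε / 2) := by positivity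
  have hθ : ∀ᶠ θ in nhdsWithin (0 : ℝ) (Set.Ioi 0), 0 < θ ∧
      (∀ j, ∑ i, q j i * Real.exp (θ * ((bb j i : ℝ) - a * kb j i)) ≤ 1) ∧
      (∀ j, ∑ i, q j i *
        Real.exp (θ * (Real.log (q j i / γ j i) - c * kb j i)) ≤ 1) := by
    refine Filter.Eventually.and self_mem_nhdsWithin (Filter.Eventually.and ?_ ?_)
    · refine Filter.eventually_all.mpr fun j => RB.eventually_mgf_le_one (hqs j) ?_
      have : ∑ i, q j i * ((bb j i : ℝ) - a * kb j i)
          = ∑ i, q j i * (bb j i : ℝ) - a * ∑ i, q j i * (kb j i : ℝ) := by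
        rw [Finset.mul_sum, ← Finset.sum_sub_distrib]
        exact Finset.sum_congr rfl fun i _ => by ring
      rw [this, ha]
      have := mul_pos hαε (hqk j)
      linarith [hf j]
    · refine Filter.eventually_all.mpr fun j => RB.eventually_mgf_le_one (hqs j) ?_
      have : ∑ i, q j i * (Real.log (q j i / γ j i) - c * kb j i)
          = RB.KL (q j) (γ j) - c * ∑ i, q j i * (kb j i : ℝ) := by
        rw [RB.KL, Finset.mul_sum, ← Finset.sum_sub_distrib]
        exact Finset.sum_congr rfl fun i _ => by ring
      rw [this]
      linarith [hKL j]
  obtain ⟨θ, hθ0, h1, h2⟩ := hθ.exists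
  have hlim : ∀ s t : ℝ, 0 < s → Filter.Tendsto (fun k : ℕ => Real.exp (-(s * k - t)))
      Filter.atTop (nhds 0) := fun s t hs =>
    Real.tendsto_exp_neg_atTop_nhds_zero.comp
      (Filter.tendsto_atTop_add_const_right _ (-t)
        (tendsto_natCast_atTop_atTop.const_mul_atTop hs))
  have hb1 := (hlim (θ * (α * (ε / 2))) θ (by positivity)).eventually_le_const
    (show (0 : ℝ) < 1 / 4 by norm_num)
  have hb2 := (hlim (θ * δ) 0 (by positivity)).eventually_le_const
    (show (0 : ℝ) < 1 / 4 by norm_num)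
  have hb3 := (tendsto_natCast_atTop_atTop (R := ℝ)).const_mul_atTop hδ0
    |>.eventually_ge_atTop (Real.log 2)
  filter_upwards [hb1, hb2, hb3, Filter.eventually_gt_atTop 0] with k k1 k2 k3 k0
  have k0' : (0 : ℝ) < k := by exact_mod_cast k0
  set bz := ⌊α * (1 + ε) * (k : ℝ)⌋ with hbz
  have hfl : α * (1 + ε) * (k : ℝ) - 1 < bz := Int.sub_one_lt_floor _
  have hlow := RB.lower_bound hbb hγpos hks hp01 hpzero hprec hq hqs hθ0
    (show 0 ≤ a by positivity) h1 h2 (bz.toNat + 1) bz (by push_cast; omega) k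
    ((c + δ) * k)
  have e1 : Real.exp (-(θ * (bz - a * k))) ≤ 1 / 4 := by
    refine le_trans (Real.exp_le_exp.mpr ?_) k1
    have : θ * (α * (1 + ε) * (k : ℝ) - 1 - a * k) ≤ θ * (bz - a * k) :=
      mul_le_mul_of_nonneg_left (by linarith) hθ0.le
    rw [ha] at this ⊢
    linarith
  have e2 : Real.exp (-(θ * ((c + δ) * k - c * k))) ≤ 1 / 4 := by
    refine le_trans (le_of_eq ?_) k2
    ring_nf
  have hp : Real.exp (-((c + δ) * k) - Real.log 2) ≤ p bz k := by
    refine le_trans ?_ hlow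
    rw [Real.exp_sub, Real.exp_log two_pos, div_eq_mul_inv]
    exact mul_le_mul_of_nonneg_left (by linarith) (Real.exp_pos _).le
  have hlog := (Real.le_log_iff_exp_le ((Real.exp_pos _).trans_le hp)).mpr hp
  rw [le_div_iff₀ k0']
  refine le_trans ?_ hlog
  have hMε : 0 ≤ M * ε * k := by positivity
  have hδk : 0 < δ * k := by positivity
  have hη4 : η = 4 * δ := by rw [hδ]; ring
  rw [hη4, hc]
  linarith
end
end

section
/- For every b ∈ ℤ and k ∈ ℕ, the composite recurrence satisfies p(b,k) = inf_{R ∈ 𝓡(k)} Pr_{R,Γ}(S^{b,k}). -/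
/-!
For a fixed rules mapping `R`, splitting a word `a :: w` of `A^{b,k}` at its first letter gives
the first-step identity `PrS_step`:
`Pr_R(S^{b,k}) = ∑_{i ∈ 𝒳_{R(ε)}} γ_i · Pr_{R_i}(S^{b - B_i, k - K_i})`, where
`R_i(w) = R(i :: w)` is the mapping `R` after the letter `i`. If `R` is `k`-consistent, then
`R_i` is `(k - K_i)`-consistent, so comparing with the recurrence and inducting on `b`
(every `B_i ≥ 1`) shows `p(b,k) ≤ Pr_R(S^{b,k})`.

Conversely, letting each prefix select a group attaining the minimum of the recurrence at the
current remaining pair `(b,k)` defines a `k`-consistent mapping `follow`, for which the same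
induction yields equality. Hence `p(b,k)` is the least element of the set of probabilities.
-/

open scoped Classical

noncomputable section

namespace RB

variable {N : ℕ} {r : Fin N → ℕ}

/-- the coverage `κ` of a word (`K` is the concatenation of the `k̄ʲ`) -/
def kap (K : (j : Fin N) → Fin (r j) → ℕ) (l : List (X N r)) : ℕ :=
  (l.map fun a => K a.1 a.2).sum

/-- the cost `μ` of a word (`B` is the concatenation of the `b̄ʲ`) -/
def mu (B : (j : Fin N) → Fin (r j) → ℕ) (l : List (X N r)) : ℕ :=
  (l.map fun a => B a.1 a.2).sum

/-- `P_{R,Υ}(ā) = ∏_ℓ [Υ_{a_ℓ}` if `a_ℓ ∈ 𝒳_{R(a_1,…,a_{ℓ-1})}`, else `0]` -/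
def wordP (R : List (X N r) → Fin N) (Υ : (j : Fin N) → Fin (r j) → ℝ)
    (l : List (X N r)) : ℝ :=
  ∏ ℓ : Fin l.length,
    if (l.get ℓ).1 = R (l.take ℓ.1) then Υ (l.get ℓ).1 (l.get ℓ).2 else 0

/-- the set of words `A^{b,k}` -/
def ASet (B K : (j : Fin N) → Fin (r j) → ℕ) (bb kb : ℝ) : Set (List (X N r)) :=
  if bb < 0 then ∅
  else if kb ≤ 0 then {[]}
  else {l | l ≠ [] ∧ (mu B l : ℝ) ≤ bb ∧ kb ≤ (kap K l : ℝ) ∧ (kap K l.dropLast : ℝ) < kb}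

/-- `Pr_{R,Υ}(S^{b,k}) = Σ_{ā ∈ A^{b,k}} P_{R,Υ}(ā)` (the set `A^{b,k}` is finite,
so the `tsum` is the finite sum) -/
def PrS (B K : (j : Fin N) → Fin (r j) → ℕ) (R : List (X N r) → Fin N)
    (Υ : (j : Fin N) → Fin (r j) → ℝ) (bb kb : ℝ) : ℝ :=
  ∑' l : ASet B K bb kb, wordP R Υ l.1

/-- `k`-consistent rules mappings: whenever `κ(ā) < k`, every `i ∈ 𝒳_{R(ā)}`
satisfies `K_i ≤ k - κ(ā)`. -/
def Consistent (K : (j : Fin N) → Fin (r j) → ℕ) (k : ℕ)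
    (R : List (X N r) → Fin N) : Prop :=
  ∀ l : List (X N r), kap K l < k → ∀ i : Fin (r (R l)), K (R l) i + kap K l ≤ k

end RB

namespace RB

variable {N : ℕ} {r : Fin N → ℕ}

lemma kap_cons (K : (j : Fin N) → Fin (r j) → ℕ) (a : X N r) (w : List (X N r)) :
    kap K (a :: w) = K a.1 a.2 + kap K w := by
  simp [kap]

lemma mu_cons (B : (j : Fin N) → Fin (r j) → ℕ) (a : X N r) (w : List (X N r)) :
    mu B (a :: w) = B a.1 a.2 + mu B w := by
  simp [mu]

lemma wordP_cons (R : List (X N r) → Fin N) (Υ : (j : Fin N) → Fin (r j) → ℝ)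
    (a : X N r) (w : List (X N r)) :
    wordP R Υ (a :: w) =
      (if a.1 = R [] then Υ a.1 a.2 else 0) * wordP (fun l => R (a :: l)) Υ w := by
  unfold wordP
  exact Fin.prod_univ_succ (n := w.length) _

lemma length_le_mu (B : (j : Fin N) → Fin (r j) → ℕ) (hB : ∀ j i, 1 ≤ B j i)
    (l : List (X N r)) : l.length ≤ mu B l := by
  induction l with
  | nil => simp [mu]
  | cons a w ih =>
    rw [mu_cons, List.length_cons]
    have := hB a.1 a.2
    omega

lemma finite_ASet (B K : (j : Fin N) → Fin (r j) → ℕ) (hB : ∀ j i, 1 ≤ B j i)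
    (b k : ℝ) : (ASet B K b k).Finite := by
  unfold ASet
  split_ifs with h1 h2
  · exact Set.finite_empty
  · exact Set.finite_singleton _
  · refine (List.finite_length_le (X N r) ⌊b⌋₊).subset ?_
    rintro l ⟨-, hl, -⟩
    exact (length_le_mu B hB l).trans (Nat.le_floor hl)

/-- Deleting the first letter of a word of `A^{b,k}` leaves a word of the set for the remaining
cost and coverage, and conversely. -/
lemma cons_mem_ASet (B K : (j : Fin N) → Fin (r j) → ℕ) {b k : ℝ} (hb : 0 ≤ b) (hk : 0 < k)
    (a : X N r) (w : List (X N r)) :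
    a :: w ∈ ASet B K b k ↔ w ∈ ASet B K (b - B a.1 a.2) (k - K a.1 a.2) := by
  have hmu : (0 : ℝ) ≤ mu B w := Nat.cast_nonneg _
  have hkd : (0 : ℝ) ≤ kap K w.dropLast := Nat.cast_nonneg _
  unfold ASet
  rw [if_neg (not_lt.mpr hb), if_neg (not_le.mpr hk)]
  rcases eq_or_ne w [] with rfl | hw
  · split_ifs with h1 h2
    · simp [mu]; intro h; linarith
    · simp [mu, kap, hk]; constructor <;> linarith
    · simp [mu, kap]; intro _ h; linarith
  · have hd : (a :: w).dropLast = a :: w.dropLast := List.dropLast_cons_of_ne_nil hw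
    simp only [Set.mem_ofPred_eq, hd, kap_cons, mu_cons, Nat.cast_add, ne_eq, reduceCtorEq,
      not_false_eq_true, true_and]
    split_ifs with h1 h2
    · simp only [Set.mem_empty_iff_false, iff_false]
      rintro ⟨h, -⟩; linarith
    · simp only [Set.mem_singleton_iff, hw, iff_false]
      rintro ⟨-, -, h⟩; linarith
    · simp only [Set.mem_ofPred_eq, hw, not_false_eq_true, true_and]
      constructor <;> rintro ⟨h3, h4, h5⟩ <;> refine ⟨?_, ?_, ?_⟩ <;> linarith

/-- Splitting off the first letter, as a bijection. -/
def consEquiv (B K : (j : Fin N) → Fin (r j) → ℕ) {b k : ℝ} (hb : 0 ≤ b) (hk : 0 < k) :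
    ((a : X N r) × ASet B K (b - B a.1 a.2) (k - K a.1 a.2)) ≃ ASet B K b k :=
  Equiv.ofBijective
    (fun q => ⟨q.1 :: q.2.1, (cons_mem_ASet B K hb hk q.1 q.2.1).2 q.2.2⟩) <| by
    constructor
    · rintro ⟨a, w, hw⟩ ⟨a', w', hw'⟩ h
      simp only [Subtype.mk.injEq, List.cons.injEq] at h
      obtain ⟨rfl, rfl⟩ := h
      rfl
    · rintro ⟨l, hl⟩
      cases l with
      | nil =>
        exfalso
        simp only [ASet, if_neg (not_lt.mpr hb), if_neg (not_le.mpr hk)] at hl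
        exact hl.1 rfl
      | cons a w => exact ⟨⟨a, w, (cons_mem_ASet B K hb hk a w).1 hl⟩, rfl⟩

/-- First-step identity: conditioning on the first letter of the random word. -/
lemma PrS_step (B K : (j : Fin N) → Fin (r j) → ℕ) (hB : ∀ j i, 1 ≤ B j i)
    (R : List (X N r) → Fin N) (Υ : (j : Fin N) → Fin (r j) → ℝ)
    {b k : ℝ} (hb : 0 ≤ b) (hk : 0 < k) :
    PrS B K R Υ b k = ∑ i : Fin (r (R [])), Υ (R []) i *
      PrS B K (fun l => R (⟨R [], i⟩ :: l)) Υ (b - B (R []) i) (k - K (R []) i) := by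
  have hfin : ∀ b k : ℝ, Finite (ASet B K b k) := fun b k => finite_ASet B K hB b k
  have h1 : PrS B K R Υ b k = ∑ a : X N r, (if a.1 = R [] then Υ a.1 a.2 else 0) *
      PrS B K (fun l => R (a :: l)) Υ (b - B a.1 a.2) (k - K a.1 a.2) := by
    unfold PrS
    rw [← (consEquiv B K hb hk).tsum_eq, Summable.tsum_sigma (Summable.of_finite), tsum_fintype]
    refine Finset.sum_congr rfl fun a _ => ?_
    rw [← tsum_mul_left]
    exact tsum_congr fun w => wordP_cons R Υ a w.1
  rw [h1, Fintype.sum_sigma, Finset.sum_eq_single (R [])]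
  · simp
  · intro j _ hj
    simp [hj]
  · simp

lemma PrS_neg (B K : (j : Fin N) → Fin (r j) → ℕ) (R : List (X N r) → Fin N)
    (Υ : (j : Fin N) → Fin (r j) → ℝ) {b : ℝ} (k : ℝ) (hb : b < 0) :
    PrS B K R Υ b k = 0 := by
  have : ASet B K b k = ∅ := by simp [ASet, hb]
  unfold PrS
  rw [this, tsum_empty]

lemma PrS_zero (B K : (j : Fin N) → Fin (r j) → ℕ) (R : List (X N r) → Fin N)
    (Υ : (j : Fin N) → Fin (r j) → ℝ) {b : ℝ} (hb : 0 ≤ b) :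
    PrS B K R Υ b 0 = 1 := by
  have : ASet B K b 0 = {[]} := by simp [ASet, not_lt.mpr hb]
  unfold PrS
  rw [this, tsum_singleton [] (fun l => wordP R Υ l)]
  simp [wordP]

/-- After a letter, a `k`-consistent mapping is consistent for the remaining coverage. -/
lemma Consistent.shift {K : (j : Fin N) → Fin (r j) → ℕ} {k : ℕ} {R : List (X N r) → Fin N}
    (h : Consistent K k R) (a : X N r) :
    Consistent K (k - K a.1 a.2) (fun l => R (a :: l)) := by
  intro l hl i
  have := h (a :: l) (by rw [kap_cons]; omega) i
  rw [kap_cons] at this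
  show K (R (a :: l)) i + kap K l ≤ _
  omega

/-- The rules mapping that applies a state-dependent choice `c` of a group to the remaining
cost and coverage after the letters read so far. Coverage is subtracted with truncation, which
is harmless: groups only matter while the coverage read is below the target. -/
def follow (B K : (j : Fin N) → Fin (r j) → ℕ) (c : ℤ → ℕ → Fin N) :
    ℤ → ℕ → List (X N r) → Fin N
  | b, k, [] => c b k
  | b, k, a :: w => follow B K c (b - B a.1 a.2) (k - K a.1 a.2) w

lemma consistent_follow (B K : (j : Fin N) → Fin (r j) → ℕ) (c : ℤ → ℕ → Fin N)
    (hc : ∀ b k, 1 ≤ k → ∀ i, K (c b k) i ≤ k) (b : ℤ) (k : ℕ) :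
    Consistent K k (follow B K c b k) := by
  intro l
  induction l generalizing b k with
  | nil =>
    intro hl i
    exact hc b k (Nat.one_le_of_lt hl) i
  | cons a w ih =>
    intro hl i
    rw [kap_cons] at hl ⊢
    have := ih (b - B a.1 a.2) (k - K a.1 a.2) (by omega) i
    change K (follow B K c (b - B a.1 a.2) (k - K a.1 a.2) w) i + _ ≤ _
    omega

/-- `PrS_step` at integer arguments for a consistent mapping, where the subtraction of coverages
in `ℕ` is exact. -/
lemma PrS_step_nat (B K : (j : Fin N) → Fin (r j) → ℕ) (hB : ∀ j i, 1 ≤ B j i)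
    (R : List (X N r) → Fin N) (Υ : (j : Fin N) → Fin (r j) → ℝ)
    {b : ℤ} {k : ℕ} (hb : 0 ≤ b) (hk : 1 ≤ k) (hR : ∀ i, K (R []) i ≤ k) :
    PrS B K R Υ b k = ∑ i : Fin (r (R [])), Υ (R []) i *
      PrS B K (fun l => R (⟨R [], i⟩ :: l)) Υ
        ((b - (B (R []) i : ℤ) : ℤ) : ℝ) ((k - K (R []) i : ℕ) : ℝ) := by
  rw [PrS_step B K hB R Υ (by exact_mod_cast hb) (by exact_mod_cast hk)]
  refine Finset.sum_congr rfl fun i _ => ?_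
  rw [Nat.cast_sub (hR i)]
  push_cast
  rfl

/-- Induction principle along the recurrence: the cost drops strictly at each step, until it is
negative. -/
lemma cost_induction {Q : ℤ → Prop} (hneg : ∀ b < 0, Q b)
    (hstep : ∀ b, 0 ≤ b → (∀ b' < b, Q b') → Q b) (b : ℤ) : Q b := by
  have key : ∀ n : ℕ, ∀ b : ℤ, b < n → Q b := by
    intro n
    induction n with
    | zero => exact fun b hb => hneg b (by simpa using hb)
    | succ n ih =>
      intro b hb
      rcases lt_or_ge b 0 with h | h
      · exact hneg b h
      · exact hstep b h fun b' hb' => ih b' (by push_cast at hb; omega)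
  exact key (b.toNat + 1) b (by omega)

end RB

/-- Lemma `rec_to_prob_new`:  for every `b ∈ ℤ` and `k ∈ ℕ`,
`p(b,k) = inf_{R ∈ 𝓡(k)} Pr_{R,Γ}(S^{b,k})`, where `p` is the composite recurrence. -/
theorem stmt_3
    (N : ℕ) (hN : 1 ≤ N) (r : Fin N → ℕ) (hr : ∀ j, 1 ≤ r j)
    (bb kb : (j : Fin N) → Fin (r j) → ℕ)
    (hbb : ∀ j i, 1 ≤ bb j i)
    (γ : (j : Fin N) → Fin (r j) → ℝ)
    (hγpos : ∀ j i, 0 < γ j i) (hγsum : ∀ j, ∑ i, γ j i = 1)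
    (hks : ∃ j, ∀ i, kb j i ≤ 1)
    (p : ℤ → ℕ → ℝ)
    (hp01 : ∀ bz k, p bz k ∈ Set.Icc (0 : ℝ) 1)
    (hpneg : ∀ bz : ℤ, bz < 0 → ∀ k : ℕ, p bz k = 0)
    (hpzero : ∀ bz : ℤ, 0 ≤ bz → p bz 0 = 1)
    (hprec : ∀ bz : ℤ, 0 ≤ bz → ∀ k : ℕ, 1 ≤ k →
      p bz k = sInf {x | ∃ j : Fin N, (∀ i, kb j i ≤ k) ∧
        x = ∑ i, γ j i * p (bz - (bb j i : ℤ)) (k - kb j i)}) :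
    ∀ (bz : ℤ) (k : ℕ),
      p bz k = sInf {x | ∃ R : List (RB.X N r) → Fin N,
        RB.Consistent kb k R ∧ x = RB.PrS bb kb R γ (bz : ℝ) (k : ℝ)} := by
  classical
  let V : ℤ → ℕ → Set ℝ := fun b k => {x | ∃ j : Fin N, (∀ i, kb j i ≤ k) ∧
    x = ∑ i, γ j i * p (b - (bb j i : ℤ)) (k - kb j i)}
  have hVfin : ∀ b k, (V b k).Finite := fun b k =>
    (Set.finite_range fun j => ∑ i, γ j i * p (b - (bb j i : ℤ)) (k - kb j i)).subset
      (by rintro x ⟨j, -, rfl⟩; exact ⟨j, rfl⟩)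
  obtain ⟨j₀, hj₀⟩ := hks
  -- A group attaining the minimum; for `b < 0` any admissible group serves, and `j₀` is one.
  have hch : ∀ (b : ℤ) (k : ℕ), ∃ j : Fin N, (1 ≤ k → ∀ i, kb j i ≤ k) ∧
      (0 ≤ b → 1 ≤ k → p b k = ∑ i, γ j i * p (b - (bb j i : ℤ)) (k - kb j i)) := by
    intro b k
    by_cases h : 0 ≤ b ∧ 1 ≤ k
    · have hne : (V b k).Nonempty := ⟨_, j₀, fun i => (hj₀ i).trans h.2, rfl⟩
      obtain ⟨j, hj, hx⟩ := hne.csInf_mem (hVfin b k)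
      exact ⟨j, fun _ => hj, fun _ _ => (hprec b h.1 k h.2).trans hx⟩
    · exact ⟨j₀, fun hk i => (hj₀ i).trans hk, fun hb hk => absurd ⟨hb, hk⟩ h⟩
  choose c hc hcp using hch
  have hlower : ∀ (b : ℤ) (k : ℕ) (R : List (RB.X N r) → Fin N), RB.Consistent kb k R →
      p b k ≤ RB.PrS bb kb R γ (b : ℝ) (k : ℝ) := by
    intro b
    induction b using RB.cost_induction with
    | hneg b hb =>
      intro k R _
      rw [hpneg b hb, RB.PrS_neg _ _ _ _ _ (by exact_mod_cast hb)]
    | hstep b hb ih =>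
      intro k R hR
      rcases Nat.eq_zero_or_pos k with rfl | hk
      · rw [hpzero b hb, Nat.cast_zero, RB.PrS_zero _ _ _ _ (by exact_mod_cast hb)]
      · have hadm : ∀ i, kb (R []) i ≤ k := fun i => by
          simpa [RB.kap] using hR [] (by simpa [RB.kap] using hk) i
        rw [RB.PrS_step_nat bb kb hbb R γ hb hk hadm, hprec b hb k hk]
        refine (csInf_le (hVfin b k).bddBelow ⟨R [], hadm, rfl⟩).trans ?_
        refine Finset.sum_le_sum fun i _ => mul_le_mul_of_nonneg_left ?_ (hγpos _ i).le
        exact ih _ (by have := hbb (R []) i; omega) _ _ (hR.shift ⟨R [], i⟩)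
  have hattain : ∀ (b : ℤ) (k : ℕ),
      p b k = RB.PrS bb kb (RB.follow bb kb c b k) γ (b : ℝ) (k : ℝ) := by
    intro b
    induction b using RB.cost_induction with
    | hneg b hb =>
      intro k
      rw [hpneg b hb, RB.PrS_neg _ _ _ _ _ (by exact_mod_cast hb)]
    | hstep b hb ih =>
      intro k
      rcases Nat.eq_zero_or_pos k with rfl | hk
      · rw [hpzero b hb, Nat.cast_zero, RB.PrS_zero _ _ _ _ (by exact_mod_cast hb)]
      · rw [RB.PrS_step_nat bb kb hbb (RB.follow bb kb c b k) γ hb hk (hc b k hk),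
          hcp b k hb hk]
        refine Finset.sum_congr rfl fun i _ => ?_
        rw [ih _ (by have := hbb (c b k) i; omega)]
        rfl
  intro b k
  refine (IsLeast.csInf_eq ⟨?_, ?_⟩).symm
  · exact ⟨_, RB.consistent_follow bb kb c hc b k, hattain b k⟩
  · rintro x ⟨R, hR, rfl⟩
    exact hlower b k R hR
end
end

section
/- Let T ∈ ℝ^r with T_i ≥ 0 and Σ_{i∈𝒳} T_i = 1, let Υ be an extended distribution with Υ_i > 0 whenever T_i > 0, and set λ_j = Σ_{i∈𝒳_j} T_i for 1 ≤ j ≤ N. Then Σ_{j=1}^N Σ_{i∈𝒳_j} |T_i − λ_j·Υ_i| ≤ 2·√(D_e(T‖Υ)). -/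
/-!
Put `q = λ_j Υ_i` on the group `𝒳_j`. Then `q` is a probability distribution on `𝒳`, and the
extended divergence `D_e(T‖Υ)` is the ordinary Kullback-Leibler divergence of `T` from `q`
(`RB.De_eq_sum`). The claim is therefore Pinsker's inequality with the constant `2` in place of `√2`,
which follows by way of the squared Hellinger distance `H² = ∑ (√p - √q)²`:

* `log x ≤ x - 1` at `x = √(q/p)` gives `H² ≤ ∑ p log (p/q)` (termwise: `RB.sq_sqrt_sub_le`);
* since `|p - q| = |√p - √q| (√p + √q)`, Cauchy-Schwarz gives
  `(∑ |p - q|)² ≤ H² ∑ (√p + √q)² ≤ 4 H²`.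
-/

open scoped Classical

noncomputable section

namespace RB

variable {N : ℕ} {r : Fin N → ℕ}

/-- the extended Kullback-Leibler divergence
`D_e(T‖Υ) = Σ_i T_i log(T_i/Υ_i) - Σ_j λ_j log λ_j` with `λ_j = Σ_{i ∈ 𝒳_j} T_i`
(the convention `0 · log 0 = 0` holds automatically since `Real.log 0 = 0`). -/
def De (T : X N r → ℝ) (Υ : (j : Fin N) → Fin (r j) → ℝ) : ℝ :=
  (∑ a : X N r, T a * Real.log (T a / Υ a.1 a.2))
    - ∑ j : Fin N, (∑ i, T ⟨j, i⟩) * Real.log (∑ i, T ⟨j, i⟩)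

end RB

namespace RB

/-- A term of the squared Hellinger distance is at most the matching term of the Kullback-Leibler
divergence, corrected by `q - p`, which sums to zero for probability distributions. -/
lemma sq_sqrt_sub_le {p q : ℝ} (hp : 0 ≤ p) (hq : 0 ≤ q) (hpq : 0 < p → 0 < q) :
    (√p - √q) ^ 2 ≤ p * Real.log (p / q) + (q - p) := by
  rcases hp.eq_or_lt with rfl | hp'
  · simp [Real.sq_sqrt hq]
  have hq' := hpq hp'
  have hsp : 0 < √p := Real.sqrt_pos.2 hp'
  have hsq : 0 < √q := Real.sqrt_pos.2 hq'
  have h1 : Real.log (√q / √p) ≤ √q / √p - 1 := Real.log_le_sub_one_of_pos (by positivity)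
  have h2 : Real.log (√q / √p) = - (Real.log (p / q) / 2) := by
    rw [Real.log_div hsq.ne' hsp.ne', Real.log_div hp'.ne' hq'.ne', Real.log_sqrt hq,
      Real.log_sqrt hp]
    ring
  have h3 : p * (√q / √p) = √p * √q := by
    nth_rewrite 1 [← Real.mul_self_sqrt hp]
    field_simp
  have h4 := mul_le_mul_of_nonneg_left h1 hp
  rw [h2, mul_sub, h3] at h4
  nlinarith [Real.sq_sqrt hp, Real.sq_sqrt hq]

/-- Pinsker's inequality on a finite set, with the (non-optimal) constant `2`. -/
lemma sum_abs_sub_le {ι : Type*} [Fintype ι] {p q : ι → ℝ} (hp : ∀ a, 0 ≤ p a)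
    (hq : ∀ a, 0 ≤ q a) (hpq : ∀ a, 0 < p a → 0 < q a) (hp1 : ∑ a, p a = 1)
    (hq1 : ∑ a, q a = 1) :
    ∑ a, |p a - q a| ≤ 2 * √(∑ a, p a * Real.log (p a / q a)) := by
  have hH : ∑ a, |√(p a) - √(q a)| ^ 2 ≤ ∑ a, p a * Real.log (p a / q a) := by
    calc _ ≤ ∑ a, (p a * Real.log (p a / q a) + (q a - p a)) :=
          Finset.sum_le_sum fun a _ => by
            rw [sq_abs]; exact sq_sqrt_sub_le (hp a) (hq a) (hpq a)
      _ = _ := by rw [Finset.sum_add_distrib, Finset.sum_sub_distrib, hp1, hq1]; ring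
  have hS : ∑ a, (√(p a) + √(q a)) ^ 2 ≤ 4 := by
    calc _ ≤ ∑ a, (2 * p a + 2 * q a) :=
          Finset.sum_le_sum fun a _ => by
            nlinarith [Real.sq_sqrt (hp a), Real.sq_sqrt (hq a), sq_nonneg (√(p a) - √(q a))]
      _ = 4 := by
          rw [Finset.sum_add_distrib, ← Finset.mul_sum, ← Finset.mul_sum, hp1, hq1]; norm_num
  have habs : ∀ a, |p a - q a| = |√(p a) - √(q a)| * (√(p a) + √(q a)) := fun a => by
    rw [← abs_of_nonneg (add_nonneg (Real.sqrt_nonneg (p a)) (Real.sqrt_nonneg (q a))), ← abs_mul]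
    congr 1
    nlinarith [Real.sq_sqrt (hp a), Real.sq_sqrt (hq a)]
  have hCS := Finset.sum_mul_sq_le_sq_mul_sq Finset.univ
    (fun a => |√(p a) - √(q a)|) (fun a => √(p a) + √(q a))
  have hH0 : 0 ≤ ∑ a, |√(p a) - √(q a)| ^ 2 := Finset.sum_nonneg fun a _ => sq_nonneg _
  have hD0 := hH0.trans hH
  refine abs_le_of_sq_le_sq' ?_ (by positivity) |>.2
  rw [mul_pow, Real.sq_sqrt hD0, Finset.sum_congr rfl fun a _ => habs a]
  nlinarith [mul_le_mul_of_nonneg_left hS hH0]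

variable {N : ℕ} {r : Fin N → ℕ}

lemma sum_pos_of_pos {T : X N r → ℝ} (hT0 : ∀ a, 0 ≤ T a) {a : X N r} (ha : 0 < T a) :
    0 < ∑ i, T ⟨a.1, i⟩ :=
  Finset.sum_pos' (fun _ _ => hT0 _) ⟨a.2, Finset.mem_univ _, ha⟩

/-- The extended divergence is the ordinary divergence of `T` from the distribution `λ_j Υ_i`. -/
lemma De_eq_sum {T : X N r → ℝ} {Υ : (j : Fin N) → Fin (r j) → ℝ} (hT0 : ∀ a, 0 ≤ T a)
    (hpos : ∀ a : X N r, 0 < T a → 0 < Υ a.1 a.2) :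
    De T Υ = ∑ a : X N r, T a * Real.log (T a / ((∑ i, T ⟨a.1, i⟩) * Υ a.1 a.2)) := by
  have h : ∑ j : Fin N, (∑ i, T ⟨j, i⟩) * Real.log (∑ i, T ⟨j, i⟩)
      = ∑ a : X N r, T a * Real.log (∑ i, T ⟨a.1, i⟩) := by
    rw [Fintype.sum_sigma]
    exact Finset.sum_congr rfl fun j _ => Finset.sum_mul ..
  rw [De, h, ← Finset.sum_sub_distrib]
  refine Finset.sum_congr rfl fun a _ => ?_
  rcases (hT0 a).eq_or_lt with h0 | h0
  · simp [← h0]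
  · have hl := sum_pos_of_pos hT0 h0
    have hu := hpos a h0
    rw [Real.log_div h0.ne' hu.ne', Real.log_div h0.ne' (mul_pos hl hu).ne',
      Real.log_mul hl.ne' hu.ne']
    ring

end RB

/-- Lemma 5, `norm`: for a distribution `T` on `𝒳` and an
extended distribution `Υ`, with `λ_j = Σ_{i∈𝒳_j} T_i`,
`Σ_j Σ_{i∈𝒳_j} |T_i − λ_j·Υ_i| ≤ 2·√(D_e(T‖Υ))`. -/
theorem stmt_7
    (N : ℕ) (hN : 1 ≤ N) (r : Fin N → ℕ) (hr : ∀ j, 1 ≤ r j)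
    (T : RB.X N r → ℝ) (hT0 : ∀ a, 0 ≤ T a) (hTsum : ∑ a, T a = 1)
    (Υ : (j : Fin N) → Fin (r j) → ℝ)
    (hΥ0 : ∀ j i, 0 ≤ Υ j i) (hΥ1 : ∀ j, ∑ i, Υ j i = 1)
    (hpos : ∀ a : RB.X N r, 0 < T a → 0 < Υ a.1 a.2) :
    ∑ j : Fin N, ∑ i : Fin (r j), |T ⟨j, i⟩ - (∑ i', T ⟨j, i'⟩) * Υ j i|
      ≤ 2 * Real.sqrt (RB.De T Υ) := by
  rw [RB.De_eq_sum hT0 hpos]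
  have hsum : ∑ a : RB.X N r, (∑ i, T ⟨a.1, i⟩) * Υ a.1 a.2 = 1 := by
    rw [← hTsum, Fintype.sum_sigma, Fintype.sum_sigma]
    refine Finset.sum_congr rfl fun j _ => ?_
    have h : ∑ y, (∑ i, T ⟨j, i⟩) * Υ j y = ∑ y, T ⟨j, y⟩ := by
      rw [← Finset.mul_sum, hΥ1 j, mul_one]
    exact h
  have key := RB.sum_abs_sub_le (p := T) (q := fun a => (∑ i, T ⟨a.1, i⟩) * Υ a.1 a.2) hT0
    (fun a => mul_nonneg (Finset.sum_nonneg fun _ _ => hT0 _) (hΥ0 _ _))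
    (fun a ha => mul_pos (RB.sum_pos_of_pos hT0 ha) (hpos a ha)) hTsum hsum
  rwa [Fintype.sum_sigma] at key
end
end

section
/- For every ε > 0 there exist L > 0 and, for every integer k > L and every rules mapping R ∈ 𝓡, a length n^{k,R} ∈ ℕ with n^{k,R} ≥ 1 and a vector T^{k,R} ∈ ℝ^r with n^{k,R}·T^{k,R} ∈ ℕ^r and Σ_{i∈𝒳} T^{k,R}_i = 1, such that: (1) lim_{k→∞} inf_{R∈𝓡} (1/k) · log ( Σ_{ā ∈ 𝒳^{n^{k,R}}, 𝒯(ā) = T^{k,R}} P_{R,Q}(ā) ) = 0; (2) setting λ^{k,R}_j = Σ_{i∈𝒳_j} T^{k,R}_i, lim_{k→∞} sup_{R∈𝓡} Σ_{j=1}^N Σ_{i∈𝒳_j} |T^{k,R}_i − λ^{k,R}_j·Q_i| = 0; (3) for every k > L and R ∈ 𝓡: n^{k,R}·(K·T^{k,R}) ≥ k, n^{k,R}·(B·T^{k,R}) ≤ α(1+ε)k, and n^{k,R} ≤ α(1+ε)k. -/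
/-!
Draw letters at random, the next letter having law `q̄^j` with `j = R(prefix)`. For every letter `a`
the deviation of its number of occurrences from `q a` times the number of letters of its group is
a martingale with bounded increments (`RB.sum_devInc`), so the sum of the squared deviations, the
`energy` of the prefix, grows in expectation at most linearly with the length
(`RB.sum_energy_concat_le`).

A prefix of small energy has letter counts close to a combination of the `q̄^j`, and since
`q̄^j·b̄^j ≤ α q̄^j·k̄^j` in every group, its `B`-weight is at most `α` times its `K`-weight up to
`O(√k)` (`RB.weight_le_weight`). As every entry of `B` is at least `1`, the `K`-weight therefore
reaches `k` within `A k` letters, for an integer `A ≥ 2α`. Stopping at the first such time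
and using Chebyshev's inequality (`RB.le_reward`), with probability at least `1/2` the stopped word
has energy `O(k)` and `K`-weight in `[k, k + O(1)]`. Such words have only polynomially many
pairs (length, letter counts), so one pair has probability at least an inverse polynomial in `k`
(`RB.exists_class`), uniformly in `R`. That length and type satisfy everything:
the logarithm of an inverse polynomial is `o(k)`, and the deviations `O(√k)` are `o(k)`, while
the length is at least of the order of `k`.
-/


open scoped Classical

noncomputable section

namespace RB

variable {N : ℕ} {r : Fin N → ℕ}

/-- the type `𝒯(ā)` of a word: `𝒯(ā)_a` is the frequency of the letter `a` -/
def typeOf (l : List (X N r)) (a : X N r) : ℝ := (l.count a : ℝ) / (l.length : ℝ)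

end RB

namespace RB

variable {N : ℕ} {r : Fin N → ℕ}

/-! ### Words and their probabilities -/

/-- The finite set of words of length `n`. -/
def words (N : ℕ) (r : Fin N → ℕ) : ℕ → Finset (List (X N r))
  | 0 => {[]}
  | n + 1 => (Finset.univ ×ˢ words N r n).image (fun p => p.1 :: p.2)

lemma mem_words {n : ℕ} {l : List (X N r)} : l ∈ words N r n ↔ l.length = n := by
  induction n generalizing l with
  | zero => simp [words]
  | succ n ih =>
    cases l with
    | nil => simp [words]
    | cons x l => simp [words, ih]

lemma sum_words_succ (n : ℕ) (f : List (X N r) → ℝ) :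
    ∑ w ∈ words N r (n + 1), f w = ∑ x : X N r, ∑ w ∈ words N r n, f (x :: w) := by
  rw [words, Finset.sum_image, Finset.sum_product]
  rintro ⟨x, l⟩ - ⟨y, l'⟩ - h
  simpa using h

lemma wordP_nil (R : List (X N r) → Fin N) (q : (j : Fin N) → Fin (r j) → ℝ) :
    wordP R q [] = 1 := by
  simp [wordP]

lemma wordP_concat (R : List (X N r) → Fin N) (q : (j : Fin N) → Fin (r j) → ℝ)
    (l : List (X N r)) (x : X N r) :
    wordP R q (l ++ [x]) = wordP R q l * (if x.1 = R l then q x.1 x.2 else 0) := by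
  have h : l.length + 1 = (l ++ [x]).length := by simp
  unfold wordP
  rw [← Fin.prod_congr' _ h, Fin.prod_univ_castSucc]
  congr 1
  · refine Finset.prod_congr rfl fun i _ => ?_
    have h1 : (l ++ [x]).get (Fin.cast h i.castSucc) = l.get i := by simp
    have h2 : (l ++ [x]).take (Fin.cast h i.castSucc).1 = l.take i.1 := by
      simp [List.take_append_of_le_length i.2.le]
    rw [h1, h2]
  · have h1 : (l ++ [x]).get (Fin.cast h (Fin.last _)) = x := by simp
    have h2 : (l ++ [x]).take (Fin.cast h (Fin.last _)).1 = l := by simp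
    rw [h1, h2]

lemma wordP_nonneg (R : List (X N r) → Fin N) {q : (j : Fin N) → Fin (r j) → ℝ}
    (hq0 : ∀ j i, 0 ≤ q j i) (l : List (X N r)) : 0 ≤ wordP R q l := by
  refine Finset.prod_nonneg fun i _ => ?_
  split_ifs
  · exact hq0 _ _
  · exact le_rfl

lemma sum_step (j : Fin N) (q : (j : Fin N) → Fin (r j) → ℝ) (F : X N r → ℝ) :
    ∑ x : X N r, (if x.1 = j then q x.1 x.2 else 0) * F x = ∑ i, q j i * F ⟨j, i⟩ := by
  rw [Fintype.sum_sigma, Finset.sum_eq_single j]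
  · simp
  · intro b _ hb
    simp [hb]
  · simp

/-- The extensions of a word by `n` letters carry exactly its probability. -/
lemma sum_wordP (R : List (X N r) → Fin N) {q : (j : Fin N) → Fin (r j) → ℝ}
    (hq1 : ∀ j, ∑ i, q j i = 1) (n : ℕ) (l : List (X N r)) :
    ∑ w ∈ words N r n, wordP R q (l ++ w) = wordP R q l := by
  induction n generalizing l with
  | zero => simp [words]
  | succ n ih =>
    rw [sum_words_succ]
    have : ∀ x : X N r, ∑ w ∈ words N r n, wordP R q (l ++ x :: w)
        = (if x.1 = R l then q x.1 x.2 else 0) * wordP R q l := by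
      intro x
      rw [mul_comm, ← wordP_concat, ← ih]
      simp
    simp_rw [this, sum_step, ← Finset.sum_mul, hq1, one_mul]

/-! ### Expected rewards along a random word -/

/-- The expected total reward `∑ g` collected along the prefixes visited by the random word
that starts at `l` and is extended by `m` further letters. -/
def reward (R : List (X N r) → Fin N) (q : (j : Fin N) → Fin (r j) → ℝ)
    (g : List (X N r) → ℝ) : ℕ → List (X N r) → ℝ
  | 0, l => g l
  | m + 1, l => g l + ∑ i, q (R l) i * reward R q g m (l ++ [⟨R l, i⟩])

lemma reward_nonneg (R : List (X N r) → Fin N) {q : (j : Fin N) → Fin (r j) → ℝ}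
    (hq0 : ∀ j i, 0 ≤ q j i) {g : List (X N r) → ℝ} (hg : ∀ l, 0 ≤ g l) (m : ℕ)
    (l : List (X N r)) : 0 ≤ reward R q g m l := by
  induction m generalizing l with
  | zero => exact hg l
  | succ m ih =>
    exact add_nonneg (hg l) (Finset.sum_nonneg fun i _ => mul_nonneg (hq0 _ _) (ih _))

lemma wordP_mul_reward (R : List (X N r) → Fin N) (q : (j : Fin N) → Fin (r j) → ℝ)
    (g : List (X N r) → ℝ) (m : ℕ) (l : List (X N r)) :
    wordP R q l * reward R q g m l =
      ∑ n ∈ Finset.range (m + 1), ∑ w ∈ words N r n, wordP R q (l ++ w) * g (l ++ w) := by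
  induction m generalizing l with
  | zero => simp [words, reward]
  | succ m ih =>
    rw [Finset.sum_range_succ', reward, mul_add, add_comm]
    congr 1
    · rw [← sum_step (R l) q (fun x => reward R q g m (l ++ [x])), Finset.mul_sum]
      simp_rw [sum_words_succ]
      rw [Finset.sum_comm]
      refine Finset.sum_congr rfl fun x _ => ?_
      rw [← mul_assoc, ← wordP_concat, ih]
      simp
    · simp [words]

/-! ### Martingale deviations -/

/-- The deviation of the number of occurrences of `a` from its compensator, which is `q a` times
the number of letters from the group of `a`. -/
def dev (q : (j : Fin N) → Fin (r j) → ℝ) (l : List (X N r)) (a : X N r) : ℝ :=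
  (l.count a : ℝ) - (∑ i', (l.count (⟨a.1, i'⟩ : X N r) : ℝ)) * q a.1 a.2

/-- The change of `dev q · a` when the letter `x` is appended. -/
def devInc (q : (j : Fin N) → Fin (r j) → ℝ) (x a : X N r) : ℝ :=
  (if x = a then 1 else 0) - (if x.1 = a.1 then q a.1 a.2 else 0)

lemma count_concat (l : List (X N r)) (x a : X N r) :
    ((l ++ [x]).count a : ℝ) = l.count a + (if x = a then 1 else 0) := by
  rw [List.count_append, List.count_singleton]
  push_cast
  simp

lemma dev_concat (q : (j : Fin N) → Fin (r j) → ℝ) (l : List (X N r)) (x a : X N r) :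
    dev q (l ++ [x]) a = dev q l a + devInc q x a := by
  obtain ⟨j, i⟩ := x
  obtain ⟨j', i'⟩ := a
  unfold dev devInc
  simp_rw [count_concat, Finset.sum_add_distrib]
  have : ∑ t, (if (⟨j, i⟩ : X N r) = ⟨j', t⟩ then (1 : ℝ) else 0) = if j = j' then 1 else 0 := by
    by_cases h : j = j'
    · subst h
      simp
    · simp [h]
  rw [this]
  by_cases h : j = j' <;> simp only [h, if_true, if_false] <;> ring

/-- The deviations are martingales. -/
lemma sum_devInc {q : (j : Fin N) → Fin (r j) → ℝ}
    (hq1 : ∀ j, ∑ i, q j i = 1) (j : Fin N) (a : X N r) :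
    ∑ i, q j i * devInc q ⟨j, i⟩ a = 0 := by
  obtain ⟨j', i'⟩ := a
  unfold devInc
  by_cases h : j = j'
  · subst h
    simp [mul_sub, Finset.sum_sub_distrib, ← Finset.sum_mul, hq1]
  · simp [h]

lemma devInc_sq_le {q : (j : Fin N) → Fin (r j) → ℝ} (hq0 : ∀ j i, 0 ≤ q j i)
    (hq1 : ∀ j, ∑ i, q j i = 1) (x a : X N r) : devInc q x a ^ 2 ≤ 1 := by
  have h0 := hq0 a.1 a.2
  have h1 : q a.1 a.2 ≤ 1 := by
    rw [← hq1 a.1]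
    exact Finset.single_le_sum (fun i _ => hq0 a.1 i) (Finset.mem_univ _)
  unfold devInc
  split_ifs <;> nlinarith

/-- The quadratic potential of a word: the sum of its squared deviations. -/
def energy (q : (j : Fin N) → Fin (r j) → ℝ) (l : List (X N r)) : ℝ :=
  ∑ a, dev q l a ^ 2

/-- One random step raises the expected energy by at most the size of the alphabet,
because the cross terms average to zero. -/
lemma sum_energy_concat_le {q : (j : Fin N) → Fin (r j) → ℝ} (hq0 : ∀ j i, 0 ≤ q j i)
    (hq1 : ∀ j, ∑ i, q j i = 1) (l : List (X N r)) (j : Fin N) :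
    ∑ i, q j i * energy q (l ++ [⟨j, i⟩]) ≤ energy q l + Fintype.card (X N r) := by
  unfold energy
  have hcard : (Fintype.card (X N r) : ℝ) = ∑ _a : X N r, (1 : ℝ) := by simp
  rw [hcard, ← Finset.sum_add_distrib]
  simp_rw [Finset.mul_sum]
  rw [Finset.sum_comm]
  refine Finset.sum_le_sum fun a _ => ?_
  calc ∑ i, q j i * dev q (l ++ [⟨j, i⟩]) a ^ 2
      = ∑ i, (q j i * dev q l a ^ 2 + 2 * dev q l a * (q j i * devInc q ⟨j, i⟩ a)
          + q j i * devInc q ⟨j, i⟩ a ^ 2) := by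
        refine Finset.sum_congr rfl fun i _ => ?_
        rw [dev_concat]
        ring
    _ = dev q l a ^ 2 + ∑ i, q j i * devInc q ⟨j, i⟩ a ^ 2 := by
        rw [Finset.sum_add_distrib, Finset.sum_add_distrib, ← Finset.sum_mul, ← Finset.mul_sum,
          sum_devInc hq1, hq1]
        ring
    _ ≤ dev q l a ^ 2 + ∑ i, q j i * 1 := by
        gcongr with i
        · exact hq0 _ _
        · exact devInc_sq_le hq0 hq1 _ _
    _ = dev q l a ^ 2 + 1 := by simp [hq1]

/-! ### Stopping at weight `k` -/

/-- The total `c`-weight of the letters of a word. -/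
def weight (c : X N r → ℝ) (l : List (X N r)) : ℝ := ∑ a, c a * l.count a

lemma weight_concat (c : X N r → ℝ) (l : List (X N r)) (x : X N r) :
    weight c (l ++ [x]) = weight c l + c x := by
  unfold weight
  simp_rw [count_concat, mul_add, Finset.sum_add_distrib]
  simp

/-- A word is good when its energy is below `C` and its weight lies in `[k, k + κ]`. -/
def Good (q : (j : Fin N) → Fin (r j) → ℝ) (c : X N r → ℝ) (C k κ : ℝ)
    (l : List (X N r)) : Prop :=
  energy q l < C ∧ k ≤ weight c l ∧ weight c l ≤ k + κ

/-- Chebyshev's inequality for the random word observed when its weight first reaches `k`, in the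
form of a backward induction on the number `m` of letters still to come. -/
lemma le_reward (R : List (X N r) → Fin N) {q : (j : Fin N) → Fin (r j) → ℝ}
    (hq0 : ∀ j i, 0 ≤ q j i) (hq1 : ∀ j, ∑ i, q j i = 1) {c : X N r → ℝ} {C k κ : ℝ}
    (hC : 0 < C) (hκ : ∀ x, c x ≤ κ) (m₀ : ℕ)
    (hterm : ∀ l : List (X N r), l.length = m₀ → energy q l < C → k ≤ weight c l)
    (m : ℕ) (l : List (X N r)) (hl : l.length + m = m₀) (hw : weight c l ≤ k + κ) :
    1 - (energy q l + Fintype.card (X N r) * m) / C ≤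
      reward R q (fun l => if Good q c C k κ l then 1 else 0) m l := by
  have hg : ∀ l : List (X N r), (0 : ℝ) ≤ if Good q c C k κ l then 1 else 0 := by
    intro l
    split_ifs <;> norm_num
  have key : ∀ (m : ℕ) (l : List (X N r)), weight c l ≤ k + κ → k ≤ weight c l →
      1 - (energy q l + Fintype.card (X N r) * m) / C ≤
        if Good q c C k κ l then 1 else 0 := by
    intro m l h1 h2
    have he : 0 ≤ energy q l := Finset.sum_nonneg fun a _ => sq_nonneg _
    by_cases h : energy q l < C
    · rw [if_pos ⟨h, h2, h1⟩, sub_le_self_iff]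
      positivity
    · refine le_trans ?_ (hg l)
      rw [sub_nonpos, one_le_div hC]
      have : (0 : ℝ) ≤ Fintype.card (X N r) * m := by positivity
      linarith
  induction m generalizing l with
  | zero =>
    by_cases h : energy q l < C
    · exact key 0 l hw (hterm l (by simpa using hl) h)
    · refine le_trans ?_ (hg l)
      rw [sub_nonpos, one_le_div hC]
      push_cast
      linarith
  | succ m ih =>
    by_cases hk : k ≤ weight c l
    · exact (key _ l hw hk).trans (le_add_of_nonneg_right (Finset.sum_nonneg fun i _ =>
        mul_nonneg (hq0 _ _) (reward_nonneg R hq0 hg _ _)))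
    · refine le_trans ?_ (le_add_of_nonneg_left (hg l))
      have hstep : ∀ i, q (R l) i *
          (1 - (energy q (l ++ [⟨R l, i⟩]) + Fintype.card (X N r) * m) / C) ≤
          q (R l) i * reward R q (fun l => if Good q c C k κ l then 1 else 0) m
            (l ++ [⟨R l, i⟩]) := by
        intro i
        refine mul_le_mul_of_nonneg_left (ih _ ?_ ?_) (hq0 _ _)
        · simp only [List.length_append, List.length_singleton]
          omega
        · rw [weight_concat]
          have := hκ ⟨R l, i⟩
          linarith
      refine le_trans ?_ (Finset.sum_le_sum fun i _ => hstep i)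
      have hsum : ∑ i, q (R l) i *
          (1 - (energy q (l ++ [⟨R l, i⟩]) + Fintype.card (X N r) * m) / C) =
          1 - (∑ i, q (R l) i * energy q (l ++ [⟨R l, i⟩]) + Fintype.card (X N r) * m) / C := by
        have : ∀ i, q (R l) i *
            (1 - (energy q (l ++ [⟨R l, i⟩]) + Fintype.card (X N r) * m) / C) =
            q (R l) i * (1 - Fintype.card (X N r) * m / C)
              - q (R l) i * energy q (l ++ [⟨R l, i⟩]) / C := by
          intro i
          ring
        simp_rw [this, Finset.sum_sub_distrib, ← Finset.sum_mul, hq1, ← Finset.sum_div]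
        ring
      rw [hsum]
      gcongr 1 - ?_ / C
      have := sum_energy_concat_le hq0 hq1 l (R l)
      push_cast
      linarith

/-- Pigeonhole over lengths and letter counts: if every word of length `m` with energy
below `C = 2 |𝒳| m` has weight at least `k`, then some class of good words of a common length `n`
and common letter counts has at least polynomially small probability. -/
lemma exists_class (R : List (X N r) → Fin N) {q : (j : Fin N) → Fin (r j) → ℝ}
    (hq0 : ∀ j i, 0 ≤ q j i) (hq1 : ∀ j, ∑ i, q j i = 1) {c : X N r → ℝ} {k κ : ℝ} (m : ℕ)
    (hC : 0 < 2 * (Fintype.card (X N r) : ℝ) * m) (hκ : ∀ x, c x ≤ κ) (hk : 0 ≤ k + κ)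
    (hterm : ∀ l : List (X N r), l.length = m →
      energy q l < 2 * (Fintype.card (X N r) : ℝ) * m → k ≤ weight c l) :
    ∃ w : List (X N r), Good q c (2 * (Fintype.card (X N r) : ℝ) * m) k κ w ∧
      (2 * ((m : ℝ) + 1) ^ (Fintype.card (X N r) + 1))⁻¹ ≤
        ∑ w' ∈ words N r w.length with (fun a => w'.count a) = (fun a => w.count a),
          wordP R q w' := by
  set C : ℝ := 2 * (Fintype.card (X N r) : ℝ) * m with hCdef
  set g : List (X N r) → ℝ := fun l => if Good q c C k κ l then 1 else 0 with hgdef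
  have h1 := le_reward R hq0 hq1 hC hκ m hterm m [] (by simp) (by simpa [weight] using hk)
  have h2 := wordP_mul_reward R q g m []
  rw [wordP_nil, one_mul] at h2
  have hhalf : 1 - (energy q ([] : List (X N r)) + Fintype.card (X N r) * m) / C = 1 / 2 := by
    have h3 : energy q ([] : List (X N r)) = 0 := by simp [energy, dev]
    have h4 : (Fintype.card (X N r) : ℝ) * m = C / 2 := by rw [hCdef]; ring
    rw [h3, h4]
    field_simp
    ring
  rw [hhalf, h2] at h1
  simp only [List.nil_append] at h1
  set cnt : List (X N r) → X N r → ℕ := fun w a => w.count a with hcnt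
  set S : Finset (X N r → ℕ) := Fintype.piFinset (fun _ => Finset.range (m + 1)) with hS
  have h3 : ∑ n ∈ Finset.range (m + 1), ∑ w ∈ words N r n, wordP R q w * g w =
      ∑ p ∈ Finset.range (m + 1) ×ˢ S,
        ∑ w ∈ words N r p.1 with cnt w = p.2, wordP R q w * g w := by
    rw [Finset.sum_product]
    refine Finset.sum_congr rfl fun n hn => ?_
    refine (Finset.sum_fiberwise_of_maps_to (g := cnt) (fun w hw => ?_) _).symm
    rw [hS, Fintype.mem_piFinset]
    intro a
    have := mem_words.1 hw
    have h5 : w.count a ≤ w.length := List.count_le_length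
    simp only [Finset.mem_range, hcnt] at hn ⊢
    omega
  rw [h3] at h1
  have hcard : ((Finset.range (m + 1) ×ˢ S).card : ℝ) =
      ((m : ℝ) + 1) ^ (Fintype.card (X N r) + 1) := by
    simp only [hS, Finset.card_product, Finset.card_range, Fintype.card_piFinset,
      Finset.prod_const, Finset.card_univ]
    push_cast
    ring
  obtain ⟨p, -, hp⟩ := Finset.exists_le_of_sum_le (s := Finset.range (m + 1) ×ˢ S)
    (f := fun _ => (2 * ((m : ℝ) + 1) ^ (Fintype.card (X N r) + 1))⁻¹)
    (g := fun p => ∑ w ∈ words N r p.1 with cnt w = p.2, wordP R q w * g w)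
    ⟨(0, 0), by simp [hS]⟩ (by
      refine le_trans (le_of_eq ?_) h1
      rw [Finset.sum_const, nsmul_eq_mul, hcard]
      have : ((m : ℝ) + 1) ^ (Fintype.card (X N r) + 1) ≠ 0 := by positivity
      field_simp)
  have hpos : 0 < ∑ w ∈ words N r p.1 with cnt w = p.2, wordP R q w * g w :=
    lt_of_lt_of_le (by positivity) hp
  obtain ⟨w, hw, hwpos⟩ := Finset.exists_ne_zero_of_sum_ne_zero hpos.ne'
  rw [Finset.mem_filter, mem_words] at hw
  have hgood : Good q c C k κ w := by
    by_contra h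
    exact hwpos (by simp [hgdef, h])
  refine ⟨w, hgood, hp.trans ?_⟩
  rw [hw.1]
  have h6 : (fun a => w.count a) = p.2 := hw.2
  rw [h6]
  refine Finset.sum_le_sum fun w' _ => ?_
  have := wordP_nonneg R hq0 w'
  simp only [hgdef]
  split_ifs <;> simp [this]

/-! ### Consequences of small energy -/

lemma abs_dev_le {q : (j : Fin N) → Fin (r j) → ℝ} {l : List (X N r)} {C : ℝ}
    (h : energy q l ≤ C) (a : X N r) : |dev q l a| ≤ √C := by
  refine Real.abs_le_sqrt (le_trans ?_ h)
  exact Finset.single_le_sum (f := fun a => dev q l a ^ 2) (fun a _ => sq_nonneg _)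
    (Finset.mem_univ a)

lemma weight_eq (q : (j : Fin N) → Fin (r j) → ℝ) (c : X N r → ℝ) (l : List (X N r)) :
    weight c l = ∑ j, (∑ i, (l.count (⟨j, i⟩ : X N r) : ℝ)) * (∑ i, q j i * c ⟨j, i⟩)
      + ∑ a, c a * dev q l a := by
  have : ∑ a, c a * dev q l a = weight c l - ∑ a : X N r,
      c a * ((∑ i', (l.count (⟨a.1, i'⟩ : X N r) : ℝ)) * q a.1 a.2) := by
    rw [weight, ← Finset.sum_sub_distrib]
    exact Finset.sum_congr rfl fun a _ => mul_sub _ _ _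
  rw [this, Fintype.sum_sigma]
  have h2 : ∀ j, ∑ i, c ⟨j, i⟩ * ((∑ i', (l.count (⟨j, i'⟩ : X N r) : ℝ)) * q j i) =
      (∑ i, (l.count (⟨j, i⟩ : X N r) : ℝ)) * (∑ i, q j i * c ⟨j, i⟩) := by
    intro j
    rw [Finset.mul_sum]
    exact Finset.sum_congr rfl fun i _ => by ring
  simp only [h2]
  ring

lemma abs_sum_mul_dev_le {q : (j : Fin N) → Fin (r j) → ℝ} {l : List (X N r)} {C : ℝ}
    (h : energy q l ≤ C) {c : X N r → ℝ} (hc : ∀ a, 0 ≤ c a) :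
    |∑ a, c a * dev q l a| ≤ (∑ a, c a) * √C := by
  rw [Finset.sum_mul]
  refine (Finset.abs_sum_le_sum_abs _ _).trans (Finset.sum_le_sum fun a _ => ?_)
  rw [abs_mul, abs_of_nonneg (hc a)]
  exact mul_le_mul_of_nonneg_left (abs_dev_le h a) (hc a)

/-- If `q̄^j·b ≤ α q̄^j·c` in every group, then a word of small energy satisfies the same
inequality for its total weights, up to an error of the order of the deviations. -/
lemma weight_le_weight {q : (j : Fin N) → Fin (r j) → ℝ} {l : List (X N r)} {C α : ℝ}
    (hα : 0 ≤ α) (h : energy q l ≤ C) {b c : X N r → ℝ} (hb : ∀ a, 0 ≤ b a) (hc : ∀ a, 0 ≤ c a)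
    (hbc : ∀ j, ∑ i, q j i * b ⟨j, i⟩ ≤ α * ∑ i, q j i * c ⟨j, i⟩) :
    weight b l ≤ α * weight c l + (α * ∑ a, c a + ∑ a, b a) * √C := by
  have h1 : ∑ j, (∑ i, (l.count (⟨j, i⟩ : X N r) : ℝ)) * (∑ i, q j i * b ⟨j, i⟩) ≤
      α * ∑ j, (∑ i, (l.count (⟨j, i⟩ : X N r) : ℝ)) * (∑ i, q j i * c ⟨j, i⟩) := by
    rw [Finset.mul_sum]
    refine Finset.sum_le_sum fun j _ => ?_
    have h0 : 0 ≤ ∑ i, (l.count (⟨j, i⟩ : X N r) : ℝ) := by positivity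
    calc _ ≤ (∑ i, (l.count (⟨j, i⟩ : X N r) : ℝ)) * (α * ∑ i, q j i * c ⟨j, i⟩) :=
          mul_le_mul_of_nonneg_left (hbc j) h0
      _ = _ := by ring
  have h2 := (abs_le.1 (abs_sum_mul_dev_le h hb)).2
  have h3 := mul_le_mul_of_nonneg_left (abs_le.1 (abs_sum_mul_dev_le h hc)).1 hα
  rw [weight_eq q b, weight_eq q c]
  linarith

lemma sum_count (l : List (X N r)) : ∑ a, (l.count a : ℝ) = l.length := by
  have := Multiset.sum_count_eq_card (s := Finset.univ) (m := (l : Multiset (X N r)))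
    (fun a _ => Finset.mem_univ a)
  simp only [Multiset.coe_count, Multiset.coe_card] at this
  exact_mod_cast this

lemma length_le_weight {b : X N r → ℝ} (hb : ∀ a, 1 ≤ b a) (l : List (X N r)) :
    (l.length : ℝ) ≤ weight b l := by
  rw [← sum_count, weight]
  exact Finset.sum_le_sum fun a _ => le_mul_of_one_le_left (Nat.cast_nonneg _) (hb a)

lemma weight_le_mul_length {c : X N r → ℝ} {κ : ℝ} (hc : ∀ a, c a ≤ κ) (l : List (X N r)) :
    weight c l ≤ κ * l.length := by
  rw [← sum_count, weight, Finset.mul_sum]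
  exact Finset.sum_le_sum fun a _ => mul_le_mul_of_nonneg_right (hc a) (Nat.cast_nonneg _)

lemma length_mul_sum_typeOf (c : X N r → ℝ) {l : List (X N r)} (hl : 1 ≤ l.length) :
    (l.length : ℝ) * ∑ a, c a * typeOf l a = weight c l := by
  have : (l.length : ℝ) ≠ 0 := by positivity
  rw [weight, Finset.mul_sum]
  refine Finset.sum_congr rfl fun a _ => ?_
  rw [typeOf]
  field_simp

lemma sum_abs_typeOf_le {q : (j : Fin N) → Fin (r j) → ℝ} {l : List (X N r)} {C : ℝ}
    (h : energy q l ≤ C) :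
    ∑ j : Fin N, ∑ i : Fin (r j),
      |typeOf l ⟨j, i⟩ - (∑ i', typeOf l ⟨j, i'⟩) * q j i| ≤
      Fintype.card (X N r) * √C / l.length := by
  rw [← Fintype.sum_sigma (fun a : X N r => |typeOf l a - (∑ i', typeOf l ⟨a.1, i'⟩) * q a.1 a.2|)]
  have : (Fintype.card (X N r) : ℝ) * √C / l.length = ∑ _a : X N r, √C / l.length := by
    simp [mul_div_assoc]
  rw [this]
  refine Finset.sum_le_sum fun a _ => ?_
  have h2 : typeOf l a - (∑ i', typeOf l ⟨a.1, i'⟩) * q a.1 a.2 = dev q l a / l.length := by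
    simp only [typeOf, dev, ← Finset.sum_div]
    ring
  rw [h2, abs_div, Nat.abs_cast]
  gcongr
  exact abs_dev_le h a

lemma tsum_type_class (R : List (X N r) → Fin N) (q : (j : Fin N) → Fin (r j) → ℝ)
    {w : List (X N r)} (hw : 1 ≤ w.length) :
    ∑' l : {l : List (X N r) | l.length = w.length ∧ ∀ a, typeOf l a = typeOf w a},
        wordP R q l.1 =
      ∑ w' ∈ words N r w.length with (fun a => w'.count a) = (fun a => w.count a),
        wordP R q w' := by
  have hset : {l : List (X N r) | l.length = w.length ∧ ∀ a, typeOf l a = typeOf w a} =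
      ↑((words N r w.length).filter
        (fun w' => (fun a => w'.count a) = (fun a => w.count a))) := by
    ext l
    simp only [Set.mem_ofPred_eq, Finset.coe_filter, mem_words, funext_iff]
    refine and_congr_right fun hl => forall_congr' fun a => ?_
    have : (w.length : ℝ) ≠ 0 := by positivity
    rw [typeOf, typeOf, hl, div_left_inj' this, Nat.cast_inj]
  rw [hset]
  exact Finset.tsum_subtype' _ _

/-! ### Asymptotics -/

lemma tendsto_sqrt_div (c : ℝ) :
    Filter.Tendsto (fun k : ℕ => √(c * k) / (k : ℝ)) Filter.atTop (nhds 0) := by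
  have h1 : Filter.Tendsto (fun k : ℕ => c / (k : ℝ)) Filter.atTop (nhds 0) :=
    tendsto_const_div_atTop_nhds_zero_nat c
  have h2 := (Real.continuous_sqrt.tendsto 0).comp h1
  rw [Real.sqrt_zero] at h2
  refine h2.congr fun k => ?_
  rcases Nat.eq_zero_or_pos k with rfl | hk
  · simp
  · have hk' : (0 : ℝ) < k := by exact_mod_cast hk
    have h3 : c * (k : ℝ) = c / k * (k : ℝ) ^ 2 := by field_simp
    simp only [Function.comp]
    rw [h3, Real.sqrt_mul' _ (by positivity), Real.sqrt_sq hk'.le, mul_div_cancel_right₀ _ hk'.ne']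

lemma tendsto_log_div (A d : ℕ) (hA : 1 ≤ A) :
    Filter.Tendsto (fun k : ℕ => Real.log (2 * (((A * k : ℕ) : ℝ) + 1) ^ d) / (k : ℝ))
      Filter.atTop (nhds 0) := by
  have hx : Filter.Tendsto (fun k : ℕ => (A : ℝ) * k + 1) Filter.atTop Filter.atTop :=
    Filter.tendsto_atTop_add_const_right _ _
      (Filter.Tendsto.const_mul_atTop (by exact_mod_cast hA) tendsto_natCast_atTop_atTop)
  have h1 := (Real.isLittleO_log_id_atTop.tendsto_div_nhds_zero).comp hx
  have h2 : Filter.Tendsto (fun k : ℕ => (1 : ℝ) / k) Filter.atTop (nhds 0) :=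
    tendsto_const_div_atTop_nhds_zero_nat 1
  have h3 : Filter.Tendsto (fun k : ℕ => Real.log 2 / (k : ℝ)) Filter.atTop (nhds 0) :=
    tendsto_const_div_atTop_nhds_zero_nat _
  have h4 := h3.add ((h1.mul (h2.const_add (A : ℝ))).const_mul (d : ℝ))
  simp only [zero_mul, mul_zero, add_zero] at h4
  refine h4.congr' ?_
  filter_upwards [Filter.eventually_ge_atTop 1] with k hk
  have hk' : (0 : ℝ) < k := by exact_mod_cast hk
  have hy : (0 : ℝ) < A * k + 1 := by positivity
  push_cast
  rw [Real.log_mul two_ne_zero (by positivity), Real.log_pow]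
  simp only [Function.comp, id]
  field_simp

/-! ### The main construction -/

/-- For each `k` and each rules mapping `R` there is a word whose type has the required
properties, with explicit errors of order `√k`. -/
lemma exists_word (R : List (X N r) → Fin N) [Nonempty (X N r)]
    {q : (j : Fin N) → Fin (r j) → ℝ}
    (hq0 : ∀ j i, 0 ≤ q j i) (hq1 : ∀ j, ∑ i, q j i = 1) {b c : X N r → ℝ} {α : ℝ} (hα : 0 < α)
    (hb : ∀ a, 1 ≤ b a) (hc : ∀ a, 0 ≤ c a)
    (hbc : ∀ j, ∑ i, q j i * b ⟨j, i⟩ ≤ α * ∑ i, q j i * c ⟨j, i⟩)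
    (A k : ℕ) (hA : 2 * α ≤ A) (hk : 1 ≤ k)
    (herr : (α * ∑ a, c a + ∑ a, b a) * √(2 * (Fintype.card (X N r) : ℝ) * A * k) ≤ α * k) :
    ∃ w : List (X N r), 1 ≤ w.length ∧
      Good q c (2 * (Fintype.card (X N r) : ℝ) * A * k) k (∑ a, c a) w ∧
      (2 * (((A * k : ℕ) : ℝ) + 1) ^ (Fintype.card (X N r) + 1))⁻¹ ≤
        ∑ w' ∈ words N r w.length with (fun a => w'.count a) = (fun a => w.count a),
          wordP R q w' := by
  have hA0 : (0 : ℝ) < A := by linarith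
  have hk0 : (0 : ℝ) < k := by exact_mod_cast hk
  have hcard : (0 : ℝ) < Fintype.card (X N r) := by exact_mod_cast Fintype.card_pos
  have hC : 2 * (Fintype.card (X N r) : ℝ) * ((A * k : ℕ) : ℝ) =
      2 * (Fintype.card (X N r) : ℝ) * A * k := by
    push_cast
    ring
  have hκ : ∀ x, c x ≤ ∑ a, c a := fun x =>
    Finset.single_le_sum (fun a _ => hc a) (Finset.mem_univ x)
  have hκ0 : 0 ≤ ∑ a, c a := Finset.sum_nonneg fun a _ => hc a
  obtain ⟨w, hw, hp⟩ := exists_class R hq0 hq1 (c := c) (k := (k : ℝ)) (κ := ∑ a, c a) (A * k)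
    (by rw [hC]; positivity) hκ (by positivity) (by
      intro l hl he
      rw [hC] at he
      have h1 := weight_le_weight hα.le he.le (fun a => zero_le_one.trans (hb a)) hc hbc
      have h2 := length_le_weight hb l
      rw [hl] at h2
      push_cast at h2
      have h3 : 2 * α * k ≤ A * k := mul_le_mul_of_nonneg_right hA hk0.le
      have h4 : α * k ≤ α * weight c l := by linarith
      exact le_of_mul_le_mul_left h4 hα)
  rw [hC] at hw
  refine ⟨w, ?_, hw, hp⟩
  rw [Nat.one_le_iff_ne_zero]
  intro h0
  have h1 := hw.2.1
  rw [List.length_eq_zero_iff.1 h0] at h1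
  simp only [weight, List.count_nil, Nat.cast_zero, mul_zero, Finset.sum_const_zero] at h1
  linarith

end RB

/-- Lemma 6, `weak_generator`.  Here `q j` is the minimizer
attaining the `α`-branching number `M_j`, and `Q` is their concatenation.
For every `ε > 0` there are `L > 0` and, for every `k > L` and rules mapping `R`,
a length `n^{k,R} ≥ 1` and a type `T^{k,R}` (so `n·T ∈ ℕ^r` and `Σ T = 1`)
satisfying properties (1), (2), (3). -/
theorem stmt_8
    (N : ℕ) (hN : 1 ≤ N) (r : Fin N → ℕ) (hr : ∀ j, 1 ≤ r j)
    (bb kb : (j : Fin N) → Fin (r j) → ℕ)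
    (hbb : ∀ j i, 1 ≤ bb j i)
    (γ : (j : Fin N) → Fin (r j) → ℝ)
    (hγpos : ∀ j i, 0 < γ j i) (hγsum : ∀ j, ∑ i, γ j i = 1)
    (α : ℝ) (hα : 0 < α)
    (hfeas : ∀ j, (RB.BrSet α (bb j) (kb j) (γ j)).Nonempty)
    (q : (j : Fin N) → Fin (r j) → ℝ)
    (hq : ∀ j, (∀ i, 0 ≤ q j i) ∧ (∑ i, q j i = 1) ∧
      (∑ i, q j i * (bb j i : ℝ)) ≤ α * (∑ i, q j i * (kb j i : ℝ)) ∧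
      RB.KL (q j) (γ j) / (∑ i, q j i * (kb j i : ℝ)) =
        sInf (RB.BrSet α (bb j) (kb j) (γ j)))
    (ε : ℝ) (hε : 0 < ε) :
    ∃ L : ℝ, 0 < L ∧
    ∃ n : ℕ → (List (RB.X N r) → Fin N) → ℕ,
    ∃ T : ℕ → (List (RB.X N r) → Fin N) → RB.X N r → ℝ,
      -- `n^{k,R}` is a length and `T^{k,R}` is a type of length-`n^{k,R}` words
      (∀ k : ℕ, L < (k : ℝ) → ∀ R : List (RB.X N r) → Fin N,
        1 ≤ n k R ∧ (∀ a, ∃ m : ℕ, (n k R : ℝ) * T k R a = (m : ℝ)) ∧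
        (∑ a, T k R a = 1)) ∧
      -- (1)
      Filter.Tendsto (fun k : ℕ =>
          sInf {x | ∃ R : List (RB.X N r) → Fin N,
            x = Real.log (∑' l : {l : List (RB.X N r) |
                  l.length = n k R ∧ ∀ a, RB.typeOf l a = T k R a},
                RB.wordP R q l.1) / (k : ℝ)})
        Filter.atTop (nhds 0) ∧
      -- (2)
      Filter.Tendsto (fun k : ℕ =>
          sSup {x | ∃ R : List (RB.X N r) → Fin N,
            x = ∑ j : Fin N, ∑ i : Fin (r j),
              |T k R ⟨j, i⟩ - (∑ i', T k R ⟨j, i'⟩) * q j i|})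
        Filter.atTop (nhds 0) ∧
      -- (3)
      (∀ k : ℕ, L < (k : ℝ) → ∀ R : List (RB.X N r) → Fin N,
        (k : ℝ) ≤ (n k R : ℝ) * ∑ a : RB.X N r, (kb a.1 a.2 : ℝ) * T k R a ∧
        (n k R : ℝ) * (∑ a : RB.X N r, (bb a.1 a.2 : ℝ) * T k R a) ≤ α * (1 + ε) * k ∧
        (n k R : ℝ) ≤ α * (1 + ε) * k) := by
  obtain ⟨R₀⟩ : Nonempty (List (RB.X N r) → Fin N) := ⟨fun _ => ⟨0, hN⟩⟩
  have : Nonempty (RB.X N r) := ⟨⟨⟨0, hN⟩, ⟨0, hr _⟩⟩⟩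
  have hq0 : ∀ j i, 0 ≤ q j i := fun j => (hq j).1
  have hq1 : ∀ j, ∑ i, q j i = 1 := fun j => (hq j).2.1
  set b : RB.X N r → ℝ := fun a => (bb a.1 a.2 : ℝ) with hb_def
  set c : RB.X N r → ℝ := fun a => (kb a.1 a.2 : ℝ) with hc_def
  have hb : ∀ a, 1 ≤ b a := fun a => Nat.one_le_cast.2 (hbb a.1 a.2)
  have hc : ∀ a, 0 ≤ c a := fun a => Nat.cast_nonneg _
  have hbc : ∀ j, ∑ i, q j i * b ⟨j, i⟩ ≤ α * ∑ i, q j i * c ⟨j, i⟩ := fun j => (hq j).2.2.1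
  obtain ⟨A, hA⟩ := exists_nat_ge (2 * α)
  have hA1 : 1 ≤ A := by
    rw [Nat.one_le_iff_ne_zero]
    rintro rfl
    norm_num at hA
    linarith
  set ρ := Fintype.card (RB.X N r) with hρ
  set κ := ∑ a, c a with hκ
  have hκ0 : 0 ≤ κ := Finset.sum_nonneg fun a _ => hc a
  set E := α * κ + ∑ a, b a with hE
  -- The total error `α κ + E √C` is `o(k)`.
  have hD := tendsto_const_div_atTop_nhds_zero_nat (α * κ)
  have hD2 := RB.tendsto_sqrt_div (2 * (ρ : ℝ) * A)
  have herr := hD.add (hD2.const_mul E)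
  simp only [mul_zero, add_zero] at herr
  have hev := (herr.eventually (gt_mem_nhds hα)).and
    (herr.eventually (gt_mem_nhds (mul_pos hα hε)))
  obtain ⟨k₀, hk₀⟩ := Filter.eventually_atTop.1 hev
  have hbig : ∀ k : ℕ, (k₀ : ℝ) + 1 < k → 1 ≤ k ∧
      α * κ + E * √(2 * (ρ : ℝ) * A * k) ≤ α * k ∧
      α * κ + E * √(2 * (ρ : ℝ) * A * k) ≤ α * ε * k := by
    intro k hk
    have hk1 : k₀ + 1 < k := by exact_mod_cast hk
    have hkpos : (0 : ℝ) < k := by exact_mod_cast (by omega : 0 < k)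
    obtain ⟨h1, h2⟩ := hk₀ k (by omega)
    rw [← mul_div_assoc, ← add_div, div_lt_iff₀ hkpos] at h1 h2
    exact ⟨by omega, h1.le, h2.le⟩
  have hex : ∀ (k : ℕ) (R : List (RB.X N r) → Fin N), ∃ w : List (RB.X N r),
      (k₀ : ℝ) + 1 < k → 1 ≤ w.length ∧
      RB.Good q c (2 * (ρ : ℝ) * A * k) k κ w ∧
      (2 * (((A * k : ℕ) : ℝ) + 1) ^ (ρ + 1))⁻¹ ≤
        ∑ w' ∈ RB.words N r w.length with (fun a => w'.count a) = (fun a => w.count a),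
          RB.wordP R q w' := by
    intro k R
    by_cases hk : (k₀ : ℝ) + 1 < k
    · obtain ⟨h1, h2, -⟩ := hbig k hk
      obtain ⟨w, hw⟩ := RB.exists_word R hq0 hq1 hα hb hc hbc A k hA h1 (by
        have := mul_nonneg hα.le hκ0
        linarith)
      exact ⟨w, fun _ => hw⟩
    · exact ⟨[], fun h => absurd h hk⟩
  choose w hw using hex
  have hLev : ∀ᶠ k : ℕ in Filter.atTop, (k₀ : ℝ) + 1 < k :=
    tendsto_natCast_atTop_atTop.eventually_gt_atTop _
  refine ⟨k₀ + 1, by positivity, fun k R => (w k R).length, fun k R => RB.typeOf (w k R),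
    ?_, ?_, ?_, ?_⟩
  · intro k hk R
    obtain ⟨h1, -, -⟩ := hw k R hk
    have h0 : ((w k R).length : ℝ) ≠ 0 := by positivity
    refine ⟨h1, fun a => ⟨(w k R).count a, mul_div_cancel₀ _ h0⟩, ?_⟩
    simp only [RB.typeOf]
    rw [← Finset.sum_div, RB.sum_count, div_self h0]
  · have hlog := (RB.tendsto_log_div A (ρ + 1) hA1).neg
    rw [neg_zero] at hlog
    have key : ∀ k : ℕ, (k₀ : ℝ) + 1 < k → ∀ R : List (RB.X N r) → Fin N,
        -(Real.log (2 * (((A * k : ℕ) : ℝ) + 1) ^ (ρ + 1)) / (k : ℝ)) ≤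
          Real.log (∑' l : {l : List (RB.X N r) |
            l.length = (w k R).length ∧ ∀ a, RB.typeOf l a = RB.typeOf (w k R) a},
            RB.wordP R q l.1) / (k : ℝ) ∧
        Real.log (∑' l : {l : List (RB.X N r) |
            l.length = (w k R).length ∧ ∀ a, RB.typeOf l a = RB.typeOf (w k R) a},
            RB.wordP R q l.1) / (k : ℝ) ≤ 0 := by
      intro k hk R
      obtain ⟨h1, -, h3⟩ := hw k R hk
      rw [RB.tsum_type_class R q h1]
      have hpos : (0 : ℝ) < (2 * (((A * k : ℕ) : ℝ) + 1) ^ (ρ + 1))⁻¹ := by positivity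
      constructor
      · rw [← neg_div, ← Real.log_inv]
        gcongr
      · refine div_nonpos_of_nonpos_of_nonneg ?_ (Nat.cast_nonneg _)
        refine Real.log_nonpos (hpos.le.trans h3) ?_
        calc _ ≤ ∑ w' ∈ RB.words N r (w k R).length, RB.wordP R q w' :=
              Finset.sum_le_sum_of_subset_of_nonneg (Finset.filter_subset _ _)
                fun w' _ _ => RB.wordP_nonneg R hq0 w'
          _ = 1 := by
              have := RB.sum_wordP R hq1 (w k R).length []
              simpa only [List.nil_append, RB.wordP_nil] using this
    refine tendsto_of_tendsto_of_tendsto_of_le_of_le' hlog tendsto_const_nhds ?_ ?_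
    · filter_upwards [hLev] with k hk
      refine le_csInf ⟨_, R₀, rfl⟩ ?_
      rintro x ⟨R, rfl⟩
      exact (key k hk R).1
    · filter_upwards [hLev] with k hk
      refine Real.sInf_nonpos ?_
      rintro x ⟨R, rfl⟩
      exact (key k hk R).2
  · have hlim := hD2.const_mul ((ρ : ℝ) * κ)
    rw [mul_zero] at hlim
    refine tendsto_of_tendsto_of_tendsto_of_le_of_le' tendsto_const_nhds hlim ?_ ?_
    · refine Filter.Eventually.of_forall fun k => Real.sSup_nonneg ?_
      rintro x ⟨R, rfl⟩
      positivity
    · filter_upwards [hLev] with k hk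
      refine csSup_le ⟨_, R₀, rfl⟩ ?_
      rintro x ⟨R, rfl⟩
      obtain ⟨h1, h2, -⟩ := hw k R hk
      refine (RB.sum_abs_typeOf_le h2.1.le).trans ?_
      have hn0 : (0 : ℝ) < (w k R).length := by exact_mod_cast h1
      have hk1 := (hbig k hk).1
      have hk0 : (0 : ℝ) < k := by exact_mod_cast hk1
      -- A word of weight at least `k` has length at least `k / κ`.
      have h3 : (k : ℝ) ≤ κ * (w k R).length := h2.2.1.trans
        (RB.weight_le_mul_length (fun a => Finset.single_le_sum (fun a _ => hc a)
          (Finset.mem_univ a)) _)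
      rw [← mul_div_assoc, div_le_div_iff₀ hn0 hk0]
      have h4 : 0 ≤ (ρ : ℝ) * √(2 * (ρ : ℝ) * A * k) := by positivity
      have h5 := mul_le_mul_of_nonneg_left h3 h4
      linarith
  · intro k hk R
    obtain ⟨h1, h2, -⟩ := hw k R hk
    have hB := RB.weight_le_weight hα.le h2.1.le (fun a => zero_le_one.trans (hb a)) hc hbc
    have hB2 : RB.weight b (w k R) ≤ α * (1 + ε) * k := by
      have h4 := (hbig k hk).2.2
      have h5 := mul_le_mul_of_nonneg_left h2.2.2 hα.le
      linarith
    refine ⟨?_, ?_, (RB.length_le_weight hb _).trans hB2⟩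
    · exact h2.2.1.trans_eq (RB.length_mul_sum_typeOf c h1).symm
    · exact (RB.length_mul_sum_typeOf b h1).trans_le hB2
end
end
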